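/- Let the setting be type A_N or type B_N, let (i_t,k_t), 1 ≤ t ≤ T, be a snake, let (p_1,…,p_T) ∈ P̄_{(i_t,k_t)}, and set m = ∏_{t=1}^T m(p_t). Let (i,k) ∈ W. If m·A_{i,k}⁻¹ is not equal to ∏_{t=1}^T m(p′_t) for any (p′_1,…,p′_T) ∈ P̄_{(i_t,k_t)}, then for every (j,ℓ) ∈ W with (j,ℓ) ≠ (i,k), the monomial m·A_{i,k}⁻¹·A_{j,ℓ} is also not equal to ∏_{t=1}^T m(p′_t) for any (p′_1,…,p′_T) ∈ P̄_{(i_t,k_t)}. -/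

import Mathlib

namespace Paper

/-- The ambient setting: type `A N` (with `N ≥ 1`) or type `B N ε`
(with `N ≥ 2` and `0 < ε < 1/2`). -/
inductive Setting where
  | A (N : ℕ)
  | B (N : ℕ) (ε : ℝ)

namespace Setting

/-- The rank `N`. -/
def N : Setting → ℕ
  | A n => n
  | B n _ => n

/-- Validity of the parameters of the setting. -/
def valid : Setting → Prop
  | A n => 1 ≤ n
  | B n ε => 2 ≤ n ∧ 0 < ε ∧ ε < 1 / 2

end Setting

/-- The numbers `r_i` : in type A all equal `1`; in type B, `r_N = 1` and `r_i = 2` for `i < N`. -/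
def rr : Setting → ℕ → ℕ
  | .A _, _ => 1
  | .B n _, j => if j = n then 1 else 2

/-- The set `X` in type `A_N`. -/
def XA (n : ℕ) : Set (ℕ × ℤ) :=
  {ik | 1 ≤ ik.1 ∧ ik.1 ≤ n ∧ ((ik.1 : ℤ) - ik.2) % 2 = 1}

/-- The set `X` in type `B_N`. -/
def XB (n : ℕ) : Set (ℕ × ℤ) :=
  {ik | (ik.1 = n ∧ ik.2 % 2 = 1) ∨ (1 ≤ ik.1 ∧ ik.1 < n ∧ ik.2 % 2 = 0)}

/-- The set `X ⊆ I × ℤ`. -/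
def X : Setting → Set (ℕ × ℤ)
  | .A n => XA n
  | .B n _ => XB n

/-- The set `W = {(i,k) : (i, k - r_i) ∈ X}`. -/
def W (S : Setting) : Set (ℕ × ℤ) :=
  {ik | (ik.1, ik.2 - (rr S ik.1 : ℤ)) ∈ X S}

/-- The `r`-th point of a path (a finite list of points of the plane). -/
def pt (p : List (ℝ × ℝ)) (r : ℕ) : ℝ × ℝ := p.getD r (0, 0)

/-- The set of paths `𝒫_{i,k}` in type `A_N`. -/
def pathsA (n : ℕ) (i : ℕ) (k : ℤ) : Set (List (ℝ × ℝ)) :=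
  {p | p.length = n + 2 ∧
    (∀ r, r < n + 2 → (pt p r).1 = (r : ℝ)) ∧
    (pt p 0).2 = (i : ℝ) + (k : ℝ) ∧
    (pt p (n + 1)).2 = (n : ℝ) + 1 - (i : ℝ) + (k : ℝ) ∧
    (∀ r, r ≤ n → (pt p (r + 1)).2 - (pt p r).2 = 1 ∨ (pt p (r + 1)).2 - (pt p r).2 = -1)}

/-- The set of paths `𝒫_{N,ℓ}` in type `B_N`. -/
def pathsBspin (n : ℕ) (ε : ℝ) (l : ℤ) : Set (List (ℝ × ℝ)) :=
  {p | p.length = n + 1 ∧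
    (if l % 4 = 3 then ∀ r, r < n → (pt p r).1 = 2 * (r : ℝ)
     else ∀ r, r < n → (pt p r).1 = 4 * (n : ℝ) - 2 - 2 * (r : ℝ)) ∧
    (pt p n).1 = 2 * (n : ℝ) - 1 ∧
    (pt p 0).2 = (l : ℝ) + 2 * (n : ℝ) - 1 ∧
    (∀ r, r + 2 ≤ n → (pt p (r + 1)).2 - (pt p r).2 = 2 ∨ (pt p (r + 1)).2 - (pt p r).2 = -2) ∧
    ((pt p n).2 - (pt p (n - 1)).2 = 1 + ε ∨ (pt p n).2 - (pt p (n - 1)).2 = -(1 + ε))}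

/-- The set of paths `𝒫_{i,k}` in type `B_N`. -/
def pathsB (n : ℕ) (ε : ℝ) (i : ℕ) (k : ℤ) : Set (List (ℝ × ℝ)) :=
  if i = n then pathsBspin n ε k
  else {p | ∃ a b : List (ℝ × ℝ),
    a ∈ pathsBspin n ε (k - (2 * (n : ℤ) - 2 * (i : ℤ) - 1)) ∧
    b ∈ pathsBspin n ε (k + (2 * (n : ℤ) - 2 * (i : ℤ) - 1)) ∧
    p = a ++ b.reverse ∧
    (pt a n).1 = (pt b n).1 ∧ 0 < (pt a n).2 - (pt b n).2}

/-- The set of paths `𝒫_{i,k}`. -/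
def P : Setting → ℕ → ℤ → Set (List (ℝ × ℝ))
  | .A n => pathsA n
  | .B n ε => pathsB n ε

/-- The map `ι : X → ℤ × ℤ` of type `B_N`. -/
def iotaB (n : ℕ) (ik : ℕ × ℤ) : ℤ × ℤ :=
  if ik.1 = n then (2 * (n : ℤ) - 1, ik.2)
  else if (2 * (n : ℤ) + ik.2 - 2 * (ik.1 : ℤ)) % 4 = 2 then (2 * (ik.1 : ℤ), ik.2)
  else (4 * (n : ℤ) - 2 - 2 * (ik.1 : ℤ), ik.2)

/-- The corners of a path: `Cp S p true` is the set `C_{p,+}` of upper corners, and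
`Cp S p false` is the set `C_{p,-}` of lower corners. -/
def Cp (S : Setting) (p : List (ℝ × ℝ)) (up : Bool) : Set (ℕ × ℤ) :=
  match S with
  | .A n =>
    {jl | 1 ≤ jl.1 ∧ jl.1 ≤ n ∧
      pt p jl.1 = ((jl.1 : ℝ), (jl.2 : ℝ)) ∧
      (pt p (jl.1 - 1)).2 = (jl.2 : ℝ) + (if up then 1 else -1) ∧
      (pt p (jl.1 + 1)).2 = (jl.2 : ℝ) + (if up then 1 else -1)}
  | .B n ε =>
    {jl | jl ∈ XB n ∧
      ((∃ r : ℕ, 1 ≤ r ∧ r + 1 < p.length ∧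
          pt p r = (((iotaB n jl).1 : ℝ), ((iotaB n jl).2 : ℝ)) ∧
          (iotaB n jl).1 ≠ 0 ∧ (iotaB n jl).1 ≠ 2 * (n : ℤ) - 1 ∧
          (iotaB n jl).1 ≠ 4 * (n : ℤ) - 2 ∧
          (if up then (pt p r).2 < (pt p (r - 1)).2 ∧ (pt p r).2 < (pt p (r + 1)).2
           else (pt p (r - 1)).2 < (pt p r).2 ∧ (pt p (r + 1)).2 < (pt p r).2))
       ∨ (jl.1 = n ∧
          (if up then (2 * (n : ℝ) - 1, (jl.2 : ℝ) - ε) ∈ p ∧ (2 * (n : ℝ) - 1, (jl.2 : ℝ) + ε) ∉ p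
           else (2 * (n : ℝ) - 1, (jl.2 : ℝ) + ε) ∈ p ∧ (2 * (n : ℝ) - 1, (jl.2 : ℝ) - ε) ∉ p)))}

/-- `p'` is obtained from `p` by replacing the point `q` by the point `q'`. -/
def Replace1 (p p' : List (ℝ × ℝ)) (q q' : ℝ × ℝ) : Prop :=
  ∃ r : ℕ, r < p.length ∧ pt p r = q ∧ p'.length = p.length ∧ pt p' r = q' ∧
    ∀ s, s < p.length → s ≠ r → pt p' s = pt p s

/-- `p'` is obtained from `p` by replacing the point `q1` by `q1'` and the point `q2` by `q2'`. -/
def Replace2 (p p' : List (ℝ × ℝ)) (q1 q1' q2 q2' : ℝ × ℝ) : Prop :=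
  ∃ r s : ℕ, r < p.length ∧ s < p.length ∧ r ≠ s ∧ pt p r = q1 ∧ pt p s = q2 ∧
    p'.length = p.length ∧ pt p' r = q1' ∧ pt p' s = q2' ∧
    ∀ u, u < p.length → u ≠ r → u ≠ s → pt p' u = pt p u

/-- The path `p` can be lowered at `(j, l)`: `(j, l - r_j) ∈ C_{p,+}` and
`(j, l + r_j) ∉ C_{p,+}`. -/
def CanLower (S : Setting) (p : List (ℝ × ℝ)) (j : ℕ) (l : ℤ) : Prop :=
  (j, l - (rr S j : ℤ)) ∈ Cp S p true ∧ (j, l + (rr S j : ℤ)) ∉ Cp S p true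

/-- `p'` is the result of the lowering move at `(j,l)` applied to the path `p ∈ 𝒫_{i,k}`;
written `p' = p 𝒜_{j,l}⁻¹`. -/
def LoweredTo (S : Setting) (i : ℕ) (k : ℤ) (j : ℕ) (l : ℤ)
    (p p' : List (ℝ × ℝ)) : Prop :=
  p ∈ P S i k ∧ p' ∈ P S i k ∧ CanLower S p j l ∧
  (match S with
   | .A _ => Replace1 p p' ((j : ℝ), (l : ℝ) - 1) ((j : ℝ), (l : ℝ) + 1)
   | .B n ε =>
     if j = n then
       Replace1 p p' (2 * (n : ℝ) - 1, (l : ℝ) - 1 - ε) (2 * (n : ℝ) - 1, (l : ℝ) + 1 + ε)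
     else if j = n - 1 then
       Replace2 p p'
         (((iotaB n (j, l - 2)).1 : ℝ), (l : ℝ) - 2) (((iotaB n (j, l - 2)).1 : ℝ), (l : ℝ) + 2)
         (2 * (n : ℝ) - 1, (l : ℝ) - 1 + ε) (2 * (n : ℝ) - 1, (l : ℝ) + 1 - ε)
     else
       Replace1 p p'
         (((iotaB n (j, l - 2)).1 : ℝ), (l : ℝ) - 2) (((iotaB n (j, l - 2)).1 : ℝ), (l : ℝ) + 2))

/-- The path `p` can be raised at `(j,l)`: it is of the form `p' 𝒜_{j,l}⁻¹`. -/
def CanRaise (S : Setting) (i : ℕ) (k : ℤ) (p : List (ℝ × ℝ)) (j : ℕ) (l : ℤ) : Prop :=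
  ∃ p', LoweredTo S i k j l p' p

/-- The monomial group `ℳ`, realised as exponent functions: the free abelian group on the
symbols `Y_{i,k}`, `(i,k) ∈ X`, is identified with finitely supported functions `(ℕ × ℤ) → ℤ`,
written additively. -/
def Y (x : ℕ × ℤ) : (ℕ × ℤ) → ℤ := fun z => if z = x then 1 else 0

noncomputable def ind (s : Prop) : ℤ := @ite ℤ s (Classical.propDecidable s) 1 0

/-- The monomial `m(p)` of a path: `∏ Y_{j,l}` over upper corners times `∏ Y_{j,l}⁻¹`
over lower corners. -/
noncomputable def mon (S : Setting) (p : List (ℝ × ℝ)) : (ℕ × ℤ) → ℤ :=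
  fun x => ind (x ∈ Cp S p true) - ind (x ∈ Cp S p false)

/-- The monomials `A_{j,l}`, with the conventions `Y_{0,·} = Y_{N+1,·} = 1`. -/
def Amon (S : Setting) (j : ℕ) (l : ℤ) : (ℕ × ℤ) → ℤ :=
  match S with
  | .A n =>
      Y (j, l + 1) + Y (j, l - 1) - (if j = 1 then 0 else Y (j - 1, l))
        - (if j = n then 0 else Y (j + 1, l))
  | .B n _ =>
      if j = n then Y (n, l + 1) + Y (n, l - 1) - Y (n - 1, l)
      else if j = n - 1 then
        Y (n - 1, l + 2) + Y (n - 1, l - 2) - (if j = 1 then 0 else Y (n - 2, l))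
          - Y (n, l + 1) - Y (n, l - 1)
      else
        Y (j, l + 2) + Y (j, l - 2) - (if j = 1 then 0 else Y (j - 1, l)) - Y (j + 1, l)

/-- A monomial is dominant iff all its exponents are nonnegative. -/
def Dominant (m : (ℕ × ℤ) → ℤ) : Prop := ∀ x, 0 ≤ m x

/-- A monomial is anti-dominant iff all its exponents are nonpositive. -/
def AntiDominant (m : (ℕ × ℤ) → ℤ) : Prop := ∀ x, m x ≤ 0

/-- `(i',k')` is in snake position with respect to `(i,k)`. -/
def SnakePos : Setting → ℕ × ℤ → ℕ × ℤ → Prop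
  | .A _, ik, ik' => |(ik'.1 : ℤ) - (ik.1 : ℤ)| + 2 ≤ ik'.2 - ik.2
  | .B n _, ik, ik' =>
      if ik.1 = n ∧ ik'.1 = n then
        2 ≤ ik'.2 - ik.2 ∧ (ik'.2 - ik.2) % 4 = 2
      else if ik.1 = n ∨ ik'.1 = n then
        2 * |(ik'.1 : ℤ) - (ik.1 : ℤ)| + 3 ≤ ik'.2 - ik.2 ∧
          (ik'.2 - ik.2) % 4 = (2 * |(ik'.1 : ℤ) - (ik.1 : ℤ)| - 1) % 4
      else
        2 * |(ik'.1 : ℤ) - (ik.1 : ℤ)| + 4 ≤ ik'.2 - ik.2 ∧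
          (ik'.2 - ik.2) % 4 = (2 * |(ik'.1 : ℤ) - (ik.1 : ℤ)|) % 4

/-- A snake: a sequence of points of `X`, each in snake position w.r.t. the previous one. -/
def IsSnake (S : Setting) {T : ℕ} (w : Fin T → ℕ × ℤ) : Prop :=
  (∀ t, w t ∈ X S) ∧
  ∀ (t : Fin T) (h : (t : ℕ) + 1 < T), SnakePos S (w t) (w ⟨(t : ℕ) + 1, h⟩)

/-- `p` is strictly above `p'`. -/
def StrictlyAbove (p p' : List (ℝ × ℝ)) : Prop :=
  ∀ a ∈ p, ∀ b ∈ p', a.1 = b.1 → a.2 < b.2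

/-- A tuple of paths is non-overlapping. -/
def NonOverlapping {T : ℕ} (ps : Fin T → List (ℝ × ℝ)) : Prop :=
  ∀ s t : Fin T, s < t → StrictlyAbove (ps s) (ps t)

/-- The set `𝒫̄` of non-overlapping tuples of paths attached to a snake. -/
def PBar (S : Setting) {T : ℕ} (w : Fin T → ℕ × ℤ) : Set (Fin T → List (ℝ × ℝ)) :=
  {ps | (∀ t, ps t ∈ P S (w t).1 (w t).2) ∧ NonOverlapping ps}

/-- The product `∏_t m(p_t)` of the monomials of a tuple of paths. -/
noncomputable def tmon (S : Setting) {T : ℕ} (ps : Fin T → List (ℝ × ℝ)) : (ℕ × ℤ) → ℤ :=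
  ∑ t, mon S (ps t)

/-- Lowering move at `jl` on a tuple of paths: one component is lowered, the others
are unchanged. -/
def TLoweredTo (S : Setting) {T : ℕ} (w : Fin T → ℕ × ℤ) (jl : ℕ × ℤ)
    (ps ps' : Fin T → List (ℝ × ℝ)) : Prop :=
  ∃ t, LoweredTo S (w t).1 (w t).2 jl.1 jl.2 (ps t) (ps' t) ∧ ∀ s, s ≠ t → ps' s = ps s

/-- Sequences of raising/lowering moves on a single path; the list records, for each move,
whether it was a lowering move (`true`) or a raising move (`false`), and its site. -/
inductive MoveSeq (S : Setting) (i : ℕ) (k : ℤ) :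
    List (ℝ × ℝ) → List (ℝ × ℝ) → List (Bool × (ℕ × ℤ)) → Prop where
  | nil (p : List (ℝ × ℝ)) : MoveSeq S i k p p []
  | lower {p q r : List (ℝ × ℝ)} {jl : ℕ × ℤ} {ms : List (Bool × (ℕ × ℤ))} :
      jl ∈ W S → LoweredTo S i k jl.1 jl.2 p q → MoveSeq S i k q r ms →
      MoveSeq S i k p r ((true, jl) :: ms)
  | raise {p q r : List (ℝ × ℝ)} {jl : ℕ × ℤ} {ms : List (Bool × (ℕ × ℤ))} :
      jl ∈ W S → LoweredTo S i k jl.1 jl.2 q p → MoveSeq S i k q r ms →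
      MoveSeq S i k p r ((false, jl) :: ms)

/-- Sequences of raising/lowering moves on tuples of paths, all of whose intermediate
tuples are non-overlapping. -/
inductive TMoveSeq (S : Setting) {T : ℕ} (w : Fin T → ℕ × ℤ) :
    (Fin T → List (ℝ × ℝ)) → (Fin T → List (ℝ × ℝ)) → List (Bool × (ℕ × ℤ)) → Prop where
  | nil (ps : Fin T → List (ℝ × ℝ)) : TMoveSeq S w ps ps []
  | lower {ps qs rs : Fin T → List (ℝ × ℝ)} {jl : ℕ × ℤ} {ms : List (Bool × (ℕ × ℤ))} :
      jl ∈ W S → TLoweredTo S w jl ps qs → NonOverlapping qs →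
      TMoveSeq S w qs rs ms → TMoveSeq S w ps rs ((true, jl) :: ms)
  | raise {ps qs rs : Fin T → List (ℝ × ℝ)} {jl : ℕ × ℤ} {ms : List (Bool × (ℕ × ℤ))} :
      jl ∈ W S → TLoweredTo S w jl qs ps → NonOverlapping qs →
      TMoveSeq S w qs rs ms → TMoveSeq S w ps rs ((false, jl) :: ms)

/-- Sequences of lowering moves on tuples of paths, all of whose intermediate tuples
are non-overlapping; the list records the sites, in order. -/
inductive TLowerSeq (S : Setting) {T : ℕ} (w : Fin T → ℕ × ℤ) :
    (Fin T → List (ℝ × ℝ)) → (Fin T → List (ℝ × ℝ)) → List (ℕ × ℤ) → Prop where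
  | nil (ps : Fin T → List (ℝ × ℝ)) : TLowerSeq S w ps ps []
  | cons {ps qs rs : Fin T → List (ℝ × ℝ)} {jl : ℕ × ℤ} {ms : List (ℕ × ℤ)} :
      jl ∈ W S → TLoweredTo S w jl ps qs → NonOverlapping qs →
      TLowerSeq S w qs rs ms → TLowerSeq S w ps rs (jl :: ms)

/-- Weak order on paths with the same x-coordinates: `p` is weakly above `p'`. -/
def WeaklyAbove (p p' : List (ℝ × ℝ)) : Prop :=
  p.length = p'.length ∧ ∀ r, r < p.length → (pt p r).2 ≤ (pt p' r).2

/-- `p` is weakly below `p'`. -/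
def WeaklyBelow (p p' : List (ℝ × ℝ)) : Prop :=
  p.length = p'.length ∧ ∀ r, r < p.length → (pt p' r).2 ≤ (pt p r).2

/-- The path `top(p, p')`. -/
def topPath (p p' : List (ℝ × ℝ)) : List (ℝ × ℝ) :=
  List.zipWith (fun a b => (a.1, min a.2 b.2)) p p'

/-- The distinguished point contained in the highest path `p⁺_{i,k}`. -/
def highPoint : Setting → ℕ → ℤ → ℝ × ℝ
  | .A _, i, k => ((i : ℝ), (k : ℝ))
  | .B n ε, i, k =>
      if i = n then (2 * (n : ℝ) - 1, (k : ℝ) - ε)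
      else (((iotaB n (i, k)).1 : ℝ), ((iotaB n (i, k)).2 : ℝ))

/-- The distinguished point contained in the lowest path `p⁻_{i,k}`. -/
def lowPoint : Setting → ℕ → ℤ → ℝ × ℝ
  | .A n, i, k => ((n : ℝ) + 1 - (i : ℝ), (k : ℝ) + (n : ℝ) + 1)
  | .B n ε, i, k =>
      if i = n then (2 * (n : ℝ) - 1, (k : ℝ) + 4 * (n : ℝ) - 2 + ε)
      else (((iotaB n (i, k + 4 * (n : ℤ) - 2)).1 : ℝ),
            ((iotaB n (i, k + 4 * (n : ℤ) - 2)).2 : ℝ))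

/-- The highest path `p⁺_{i,k}` : the path of `𝒫_{i,k}` with no lower corners. -/
noncomputable def highestPath (S : Setting) (i : ℕ) (k : ℤ) : List (ℝ × ℝ) :=
  Classical.epsilon fun p => p ∈ P S i k ∧ Cp S p false = ∅

/-- The lowest path `p⁻_{i,k}` : the path of `𝒫_{i,k}` with no upper corners. -/
noncomputable def lowestPath (S : Setting) (i : ℕ) (k : ℤ) : List (ℝ × ℝ) :=
  Classical.epsilon fun p => p ∈ P S i k ∧ Cp S p true = ∅



theorem ind_pos {s : Prop} (h : s) : ind s = 1 := by simp [ind, h]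

theorem ind_neg {s : Prop} (h : ¬ s) : ind s = 0 := by simp [ind, h]

theorem ind_congr {s t : Prop} (h : s ↔ t) : ind s = ind t := by rw [propext h]

theorem ind_or_excl {s t : Prop} (h : ¬ (s ∧ t)) : ind (s ∨ t) = ind s + ind t := by
  by_cases hs : s <;> by_cases ht : t <;> simp_all [ind]

theorem ind_mono {s t : Prop} (h : s → t) : ind s ≤ ind t := by
  by_cases hs : s <;> by_cases ht : t <;> simp_all [ind]

/-- Componentwise lower path. -/
noncomputable def zmax (p q : List (ℝ × ℝ)) : List (ℝ × ℝ) :=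
  List.zipWith (fun a b => (a.1, max a.2 b.2)) p q

theorem zmax_length {p q : List (ℝ × ℝ)} (h : p.length = q.length) :
    (zmax p q).length = p.length := by
  simp [zmax, h]

theorem pt_zmax {p q : List (ℝ × ℝ)} (h : p.length = q.length) (r : ℕ) :
    pt (zmax p q) r = ((pt p r).1, max (pt p r).2 (pt q r).2) := by
  unfold pt zmax
  by_cases hr : r < p.length
  · have hr' : r < q.length := by omega
    simp [List.getD_eq_getElem?_getD, hr, hr']
  · have hr' : ¬ r < q.length := by omega
    simp [List.getD_eq_getElem?_getD, List.getElem?_eq_none (not_lt.1 hr),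
      List.getElem?_eq_none (not_lt.1 hr'), List.getElem?_zipWith]

theorem zmax_reverse {p q : List (ℝ × ℝ)} (h : p.length = q.length) :
    (zmax p q).reverse = zmax p.reverse q.reverse := by
  unfold zmax
  exact List.reverse_zipWith h

theorem pt_mem {p : List (ℝ × ℝ)} {r : ℕ} (h : r < p.length) : pt p r ∈ p := by
  simp [pt, List.getD_eq_getElem?_getD, h]

theorem mem_iff_pt {p : List (ℝ × ℝ)} {a : ℝ × ℝ} : a ∈ p ↔ ∃ r, r < p.length ∧ pt p r = a := by
  constructor
  · intro h
    obtain ⟨r, hr, e⟩ := List.mem_iff_getElem.1 h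
    exact ⟨r, hr, by simp [pt, List.getD_eq_getElem?_getD, hr, e]⟩
  · rintro ⟨r, hr, rfl⟩
    exact pt_mem hr

theorem pt_reverse {p : List (ℝ × ℝ)} {r : ℕ} (h : r < p.length) :
    pt p.reverse r = pt p (p.length - 1 - r) := by
  simp only [pt, List.getD_eq_getElem?_getD]
  rw [List.getElem?_reverse h]

theorem strictlyAbove_zmax {p p' q q' : List (ℝ × ℝ)} (hp : p.length = p'.length)
    (hq : q.length = q'.length)
    (hpx : ∀ r < p.length, (pt p r).1 = (pt p' r).1)
    (hqx : ∀ r < q.length, (pt q r).1 = (pt q' r).1)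
    (h : StrictlyAbove p q) (h' : StrictlyAbove p' q') :
    StrictlyAbove (zmax p p') (zmax q q') := by
  intro a ha b hb hab
  obtain ⟨r, hr, rfl⟩ := mem_iff_pt.1 ha
  obtain ⟨s, hs, rfl⟩ := mem_iff_pt.1 hb
  rw [zmax_length hp] at hr
  rw [zmax_length hq] at hs
  rw [pt_zmax hp, pt_zmax hq] at *
  simp only at hab ⊢
  have h1 := h _ (pt_mem hr) _ (pt_mem hs) hab
  have h2 := h' _ (pt_mem (hp ▸ hr)) _ (pt_mem (hq ▸ hs)) (by rw [← hpx r hr, ← hqx s hs, hab])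
  exact max_lt_max h1 h2

theorem sum_ind_or {T : ℕ} (Q G G' : Fin T → Prop)
    (h1 : ∀ s t, s < t → G s → Q t → G t) (h2 : ∀ s t, s < t → G' s → Q t → G' t)
    (hQ : ∀ t, G t → Q t) (hQ' : ∀ t, G' t → Q t) :
    ∑ t, ind (G t ∨ G' t) = max (∑ t, ind (G t)) (∑ t, ind (G' t)) := by
  by_cases hA : ∀ t, G' t → G t
  · rw [max_eq_left (Finset.sum_le_sum fun t _ => ind_mono (hA t))]
    exact Finset.sum_congr rfl fun t _ => ind_congr ⟨fun h => h.elim id (hA t), Or.inl⟩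
  · push Not at hA
    obtain ⟨s, hs, hs'⟩ := hA
    have hB : ∀ t, G t → G' t := by
      intro t ht
      by_contra ht'
      rcases lt_trichotomy s t with h | h | h
      · exact ht' (h2 s t h hs (hQ t ht))
      · subst h; exact ht' hs
      · exact hs' (h1 t s h ht (hQ' s hs))
    rw [max_eq_right (Finset.sum_le_sum fun t _ => ind_mono (hB t))]
    exact Finset.sum_congr rfl fun t _ => ind_congr ⟨fun h => h.elim (hB t) id, Or.inr⟩

/-- Discrete Laplacian. -/
def Lap : Setting → (ℕ × ℤ → ℤ) → (ℕ × ℤ → ℤ)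
  | .A _, E => fun x => E (x.1 - 1, x.2) + E (x.1 + 1, x.2) - E (x.1, x.2 + 1) - E (x.1, x.2 - 1)
  | .B n _, E => fun x =>
      if x.1 = n then E (n - 1, x.2 - 1) + E (n - 1, x.2 + 1) - E (n, x.2 + 1) - E (n, x.2 - 1)
      else E (x.1 - 1, x.2) + E (x.1 + 1, x.2) - E (x.1, x.2 - 2) - E (x.1, x.2 + 2)

/-- Gate condition for a half path. -/
def GS (n : ℕ) (l0 : ℤ) (p : List (ℝ × ℝ)) (x : ℕ × ℤ) : Prop :=
  (l0 + 1 + 2 * n + 2 * x.1 - x.2) % 4 = 0 ∧ (x.2 : ℝ) < (pt p x.1).2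

/-- The gate condition: the path passes below `x`. -/
def Gt : Setting → ℕ × ℤ → List (ℝ × ℝ) → ℕ × ℤ → Prop
  | .A _, _, p, x => (x.2 : ℝ) < (pt p x.1).2
  | .B n _, w, p, x =>
      if w.1 = n then GS n w.2 p x
      else GS n (w.2 - (2 * (n : ℤ) - 2 * (w.1 : ℤ) - 1)) p x ∨
        GS n (w.2 + (2 * (n : ℤ) - 2 * (w.1 : ℤ) - 1)) p.reverse x

/-- Presence of the path in the relevant column. -/
def Qt : Setting → ℕ × ℤ → ℕ × ℤ → Prop
  | .A _, _, _ => True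
  | .B n _, w, x =>
      if w.1 = n then (w.2 + 1 + 2 * n + 2 * x.1 - x.2) % 4 = 0
      else (w.2 - (2 * (n : ℤ) - 2 * (w.1 : ℤ) - 1) + 1 + 2 * n + 2 * x.1 - x.2) % 4 = 0 ∨
        (w.2 + (2 * (n : ℤ) - 2 * (w.1 : ℤ) - 1) + 1 + 2 * n + 2 * x.1 - x.2) % 4 = 0

/-- The gates, including boundary ones. -/
def Wb : Setting → Set (ℕ × ℤ)
  | .A n => {x | x.1 ≤ n + 1 ∧ ((x.1 : ℤ) - x.2) % 2 = 0}
  | .B n _ => {x | x.1 ≤ n ∧ x.2 % 2 = 0}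

/-- The boundary columns. -/
def Bdry : Setting → ℕ → Prop
  | .A n, j => j = 0 ∨ j = n + 1
  | .B _ _, j => j = 0

theorem W_sub_Wb (S : Setting) {x : ℕ × ℤ} (hx : x ∈ W S) : x ∈ Wb S := by
  cases S with
  | A n => 
    simp only [W, X, XA, rr, Wb, Set.mem_ofPred_eq] at *
    omega
  | B n e =>
    simp only [W, X, XB, rr, Wb, Set.mem_ofPred_eq] at *
    split_ifs at hx <;> push_cast at hx <;> omega

theorem W_not_bdry (S : Setting) (hS : S.valid) {x : ℕ × ℤ} (hx : x ∈ W S) : ¬ Bdry S x.1 := by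
  cases S with
  | A n => 
    simp only [W, X, XA, rr, Bdry, Set.mem_ofPred_eq] at *
    omega
  | B n e =>
    simp only [W, X, XB, rr, Bdry, Set.mem_ofPred_eq, Setting.valid] at *
    omega

theorem Lap_sub (S : Setting) (E F : ℕ × ℤ → ℤ) (x) : Lap S (E - F) x = Lap S E x - Lap S F x := by
  cases S with
  | A n => simp only [Lap, Pi.sub_apply]; ring
  | B n e => simp only [Lap, Pi.sub_apply]; split_ifs <;> ring

theorem Lap_add (S : Setting) (E F : ℕ × ℤ → ℤ) (x) : Lap S (E + F) x = Lap S E x + Lap S F x := by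
  cases S with
  | A n => simp only [Lap, Pi.add_apply]; ring
  | B n e => simp only [Lap, Pi.add_apply]; split_ifs <;> ring

theorem Lap_sum (S : Setting) {T : ℕ} (E : Fin T → ℕ × ℤ → ℤ) (x) :
    Lap S (fun y => ∑ t, E t y) x = ∑ t, Lap S (E t) x := by
  cases S with
  | A n => simp only [Lap, Finset.sum_add_distrib, Finset.sum_sub_distrib]
  | B n e =>
    simp only [Lap]; split_ifs <;> simp only [Finset.sum_add_distrib, Finset.sum_sub_distrib]

theorem Lap_congr (S : Setting) (hS : S.valid) (E F : ℕ × ℤ → ℤ) (h : ∀ x ∈ Wb S, E x = F x)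
    {x} (hx : x ∈ X S) : Lap S E x = Lap S F x := by
  obtain ⟨j, l⟩ := x
  cases S with
  | A n =>
    simp only [X, XA, Wb, Set.mem_ofPred_eq, Lap] at *
    rw [h (j - 1, l) (by simp only; omega), h (j + 1, l) (by simp only; omega),
      h (j, l + 1) (by simp only; omega), h (j, l - 1) (by simp only; omega)]
  | B n e =>
    simp only [X, XB, Wb, Set.mem_ofPred_eq, Lap] at *
    split_ifs with hj
    · rw [h (n - 1, l - 1) (by simp only; omega), h (n - 1, l + 1) (by simp only; omega),
        h (n, l + 1) (by simp only; omega), h (n, l - 1) (by simp only; omega)]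
    · rw [h (j - 1, l) (by simp only; omega), h (j + 1, l) (by simp only; omega),
        h (j, l - 2) (by simp only; omega), h (j, l + 2) (by simp only; omega)]

theorem iteY (c : Prop) [Decidable c] (a z : ℕ × ℤ) :
    (if c then (0 : ℕ × ℤ → ℤ) else Y a) z = if ¬ c ∧ z.1 = a.1 ∧ z.2 = a.2 then 1 else 0 := by
  obtain ⟨z1, z2⟩ := z
  obtain ⟨a1, a2⟩ := a
  by_cases h : c <;> simp [h, Y]

theorem Yap (a z : ℕ × ℤ) : Y a z = if z.1 = a.1 ∧ z.2 = a.2 then 1 else 0 := by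
  obtain ⟨z1, z2⟩ := z
  obtain ⟨a1, a2⟩ := a
  simp [Y]

theorem bcongr {p q : Prop} [Decidable p] [Decidable q] (h : p ↔ q) :
    (if p then (1 : ℤ) else 0) = if q then 1 else 0 := if_congr h rfl rfl

theorem b0 {p : Prop} [Decidable p] (h : ¬ p) : (if p then (1 : ℤ) else 0) = 0 := if_neg h

theorem Lap_Y (S : Setting) (hS : S.valid) {i k} (hik : (i, k) ∈ W S) {x} (hx : x ∈ X S) :
    Lap S (Y (i, k)) x = - Amon S i k x := by
  obtain ⟨j, l⟩ := x
  cases S with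
  | A n =>
    simp only [W, X, XA, rr, Set.mem_ofPred_eq] at *
    simp only [Lap, Amon, Pi.add_apply, Pi.sub_apply, iteY, Yap]
    have h1 : (if j - 1 = i ∧ l = k then (1 : ℤ) else 0) =
      if ¬ i = n ∧ j = i + 1 ∧ l = k then 1 else 0 := bcongr (by omega)
    have h2 : (if j + 1 = i ∧ l = k then (1 : ℤ) else 0) =
      if ¬ i = 1 ∧ j = i - 1 ∧ l = k then 1 else 0 := bcongr (by omega)
    have h3 : (if j = i ∧ l + 1 = k then (1 : ℤ) else 0) =
      if j = i ∧ l = k - 1 then 1 else 0 := bcongr (by omega)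
    have h4 : (if j = i ∧ l - 1 = k then (1 : ℤ) else 0) =
      if j = i ∧ l = k + 1 then 1 else 0 := bcongr (by omega)
    rw [h1, h2, h3, h4]; ring
  | B n e =>
    simp only [W, X, XB, rr, Set.mem_ofPred_eq, Setting.valid] at *
    obtain ⟨hn, -⟩ := hS
    simp only [Lap, Amon]
    by_cases hin : i = n
    · subst hin
      simp only [if_true, true_and] at hik ⊢
      by_cases hj : j = i
      · simp only [hj, if_true, true_and, Yap, Pi.add_apply, Pi.sub_apply]
        split_ifs <;> omega
      · simp only [hj, if_false, false_and, Yap, Pi.add_apply, Pi.sub_apply]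
        split_ifs <;> omega
    · simp only [hin, if_false, false_and, false_or] at hik ⊢
      push_cast at hik
      by_cases hin1 : i = n - 1
      · subst hin1
        simp only [if_true]
        by_cases hj : j = n
        · subst hj
          simp only [if_true, Yap, Pi.add_apply, Pi.sub_apply, iteY]
          simp only [true_and]
          split_ifs <;> omega
        · simp only [hj, if_false, Yap, Pi.add_apply, Pi.sub_apply, iteY]
          have h1 : (if j - 1 = n - 1 ∧ l = k then (1 : ℤ) else 0) = 0 := b0 (by omega)
          have h2 : (if j + 1 = n - 1 ∧ l = k then (1 : ℤ) else 0) =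
            if ¬ n - 1 = 1 ∧ j = n - 2 ∧ l = k then 1 else 0 := bcongr (by omega)
          have h3 : (if j = n - 1 ∧ l + 2 = k then (1 : ℤ) else 0) =
            if j = n - 1 ∧ l = k - 2 then 1 else 0 := bcongr (by omega)
          have h4 : (if j = n - 1 ∧ l - 2 = k then (1 : ℤ) else 0) =
            if j = n - 1 ∧ l = k + 2 then 1 else 0 := bcongr (by omega)
          rw [h1, h2, h3, h4]; simp only [false_and, if_false]; ring
      · simp only [hin1, if_false]
        by_cases hj : j = n
        · subst hj
          simp only [if_true, Yap, Pi.add_apply, Pi.sub_apply, iteY]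
          rw [b0 (by omega), b0 (by omega), b0 (by omega), b0 (by omega), b0 (by omega),
            b0 (by omega), b0 (by omega), b0 (by omega)]; rfl
        · simp only [hj, if_false, Yap, Pi.add_apply, Pi.sub_apply, iteY]
          have h1 : (if j - 1 = i ∧ l = k then (1 : ℤ) else 0) =
            if j = i + 1 ∧ l = k then 1 else 0 := bcongr (by omega)
          have h2 : (if j + 1 = i ∧ l = k then (1 : ℤ) else 0) =
            if ¬ i = 1 ∧ j = i - 1 ∧ l = k then 1 else 0 := bcongr (by omega)
          have h3 : (if j = i ∧ l + 2 = k then (1 : ℤ) else 0) =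
            if j = i ∧ l = k - 2 then 1 else 0 := bcongr (by omega)
          have h4 : (if j = i ∧ l - 2 = k then (1 : ℤ) else 0) =
            if j = i ∧ l = k + 2 then 1 else 0 := bcongr (by omega)
          rw [h1, h2, h3, h4]; ring

theorem Amon_off (S : Setting) (hS : S.valid) {i k} (hik : (i, k) ∈ W S) {x} (hx : x ∉ X S) :
    Amon S i k x = 0 := by
  obtain ⟨j, l⟩ := x
  cases S with
  | A n =>
    simp only [W, X, XA, rr, Set.mem_ofPred_eq] at *
    simp only [Amon, Pi.add_apply, Pi.sub_apply, iteY, Yap]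
    rw [b0 (by omega), b0 (by omega), b0 (by omega), b0 (by omega)]; rfl
  | B n e =>
    simp only [W, X, XB, rr, Set.mem_ofPred_eq, Setting.valid] at *
    obtain ⟨hn, -⟩ := hS
    simp only [Amon]
    by_cases hin : i = n
    · subst hin
      simp only [if_true, true_and, Yap, Pi.add_apply, Pi.sub_apply] at hik ⊢
      rw [b0 (by omega), b0 (by omega), b0 (by omega)]; rfl
    · simp only [hin, if_false, false_and, false_or] at hik ⊢
      push_cast at hik
      by_cases hin1 : i = n - 1
      · subst hin1
        simp only [if_true, Yap, Pi.add_apply, Pi.sub_apply, iteY]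
        rw [b0 (by omega), b0 (by omega), b0 (by omega), b0 (by omega), b0 (by omega)]; rfl
      · simp only [hin1, if_false, Yap, Pi.add_apply, Pi.sub_apply, iteY]
        rw [b0 (by omega), b0 (by omega), b0 (by omega), b0 (by omega)]; rfl

theorem Lap_inj (S : Setting) (hS : S.valid) (D : ℕ × ℤ → ℤ)
    (h0 : ∀ x ∈ X S, Lap S D x = 0) (hb : ∀ x ∈ Wb S, Bdry S x.1 → D x = 0)
    (L : ℤ) (hL : ∀ x ∈ Wb S, x.2 ≤ L → D x = 0) : ∀ x ∈ Wb S, D x = 0 := by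
  have key : ∀ m : ℕ, ∀ x ∈ Wb S, x.2 ≤ L + m → D x = 0 := by
    intro m
    induction m with
    | zero => simpa using hL
    | succ m ih =>
      rintro ⟨j, l⟩ hx hl
      by_cases hB : Bdry S j
      · exact hb _ hx hB
      cases S with
      | A n =>
        simp only [X, XA, Wb, Set.mem_ofPred_eq, Lap, Bdry] at *
        push_cast at hl
        have := h0 (j, l - 1) (by simp only; omega)
        simp only [sub_add_cancel] at this
        rw [ih (j - 1, l - 1) (by simp only; omega) (by simp only; omega),
          ih (j + 1, l - 1) (by simp only; omega) (by simp only; omega),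
          ih (j, l - 1 - 1) (by simp only; omega) (by simp only; omega)] at this
        omega
      | B n e =>
        simp only [X, XB, Wb, Set.mem_ofPred_eq, Lap, Bdry, Setting.valid] at *
        push_cast at hl
        have key : ∀ j, j < n → ¬ j = 0 → D (j, l) = 0 := by
          intro j hj hj0
          have := h0 (j, l - 2) (by simp only; omega)
          rw [if_neg (by omega)] at this
          simp only [sub_add_cancel] at this
          rw [ih (j - 1, l - 2) (by simp only; omega) (by simp only; omega),
            ih (j + 1, l - 2) (by simp only; omega) (by simp only; omega),
            ih (j, l - 2 - 2) (by simp only; omega) (by simp only; omega)] at this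
          omega
        by_cases hj : j = n
        · subst hj
          have := h0 (j, l - 1) (Or.inl ⟨rfl, by simp only; omega⟩)
          rw [if_pos rfl] at this
          simp only [sub_add_cancel] at this
          rw [key (j - 1) (by omega) (by omega),
            ih (j - 1, l - 1 - 1) (by simp only; omega) (by simp only; omega),
            ih (j, l - 1 - 1) (by simp only; omega) (by simp only; omega)] at this
          omega
        · exact key j (by omega) hB
  intro x hx
  exact key (x.2 - L).toNat x hx (by omega)


theorem pathsA_int {n i : ℕ} {k : ℤ} {p : List (ℝ × ℝ)} (hp : p ∈ pathsA n i k) :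
    ∃ z : ℕ → ℤ, (∀ r ≤ n + 1, (pt p r).2 = z r) ∧
      (∀ r ≤ n, z (r + 1) = z r + 1 ∨ z (r + 1) = z r - 1) ∧
      (∀ r ≤ n + 1, (z r - i - k - r) % 2 = 0) := by
  obtain ⟨hlen, hx, h0, h1, hs⟩ := hp
  have key : ∀ r ≤ n + 1, ∃ z : ℤ, (pt p r).2 = z ∧ (z - i - k - r) % 2 = 0 := by
    intro r
    induction r with
    | zero => intro _; exact ⟨i + k, by rw [h0]; push_cast; ring, by push_cast; omega⟩
    | succ r ih =>
      intro hr
      obtain ⟨z, hz, hm⟩ := ih (by omega)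
      rcases hs r (by omega) with h | h
      · exact ⟨z + 1, by push_cast; linarith, by push_cast; omega⟩
      · exact ⟨z - 1, by push_cast; linarith, by push_cast; omega⟩
  choose! z hz hm using key
  refine ⟨z, hz, ?_, hm⟩
  intro r hr
  have := hs r hr
  rw [hz r (by omega), hz (r + 1) (by omega)] at this
  rcases this with h | h
  · left; have : (z (r + 1) : ℝ) = ((z r + 1 : ℤ) : ℝ) := by push_cast; linarith
    exact_mod_cast this
  · right; have : (z (r + 1) : ℝ) = ((z r - 1 : ℤ) : ℝ) := by push_cast; linarith
    exact_mod_cast this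

theorem CpA_iff {n i : ℕ} {k : ℤ} {p : List (ℝ × ℝ)} (hp : p ∈ pathsA n i k) {z : ℕ → ℤ}
    (hz : ∀ r ≤ n + 1, (pt p r).2 = z r) (j : ℕ) (l : ℤ) :
    ((j, l) ∈ Cp (.A n) p true ↔ 1 ≤ j ∧ j ≤ n ∧ z j = l ∧ z (j - 1) = l + 1 ∧ z (j + 1) = l + 1) ∧
    ((j, l) ∈ Cp (.A n) p false ↔
      1 ≤ j ∧ j ≤ n ∧ z j = l ∧ z (j - 1) = l - 1 ∧ z (j + 1) = l - 1) := by
  obtain ⟨hlen, hx, -⟩ := hp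
  by_cases hj : 1 ≤ j ∧ j ≤ n
  · have e : ∀ a : ℝ × ℝ, ∀ b c : ℝ, a = (b, c) ↔ a.1 = b ∧ a.2 = c := by
      intro a b c; exact Prod.ext_iff
    simp only [Cp, Set.mem_ofPred_eq, e, hz j (by omega), hz (j - 1) (by omega),
      hz (j + 1) (by omega), hx j (by omega), true_and, if_true]
    have h1 : ((z (j - 1) : ℝ) = l + 1 ↔ z (j - 1) = l + 1) := by norm_cast
    have h2 : ((z (j + 1) : ℝ) = l + 1 ↔ z (j + 1) = l + 1) := by norm_cast
    have h3 : ((z (j - 1) : ℝ) = l + -1 ↔ z (j - 1) = l - 1) := by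
      rw [← sub_eq_add_neg]; norm_cast
    have h4 : ((z (j + 1) : ℝ) = l + -1 ↔ z (j + 1) = l - 1) := by
      rw [← sub_eq_add_neg]; norm_cast
    simp [h1, h2, h3, h4]
  · simp only [Cp, Set.mem_ofPred_eq]
    constructor <;> constructor <;> intro h <;> exact absurd ⟨h.1, h.2.1⟩ hj

theorem monA {n : ℕ} {w : ℕ × ℤ} (hw : w ∈ XA n) {p : List (ℝ × ℝ)} (hp : p ∈ pathsA n w.1 w.2)
    (x : ℕ × ℤ) (hx : x ∈ XA n) :
    mon (.A n) p x = Lap (.A n) (fun y => ind (Gt (.A n) w p y)) x := by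
  obtain ⟨j, l⟩ := x
  obtain ⟨z, hz, hs, hm⟩ := pathsA_int hp
  obtain ⟨c1, c2⟩ := CpA_iff hp hz j l
  simp only [XA, Set.mem_ofPred_eq] at hx hw
  have hs1 := hs j (by omega)
  have hs2 := hs (j - 1) (by omega)
  have hm1 := hm j (by omega)
  have g : ∀ r ≤ n + 1, ∀ l : ℤ, Gt (.A n) w p (r, l) ↔ l < z r := by
    intro r hr l
    simp only [Gt, hz r hr]; norm_cast
  rw [Nat.sub_add_cancel hx.1] at hs2
  simp only [mon, Lap, ind_congr c1, ind_congr c2, ind_congr (g (j - 1) (by omega) _),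
    ind_congr (g (j + 1) (by omega) _), ind_congr (g j (by omega) _)]
  unfold ind
  rcases hs1 with h1 | h1 <;> rcases hs2 with h2 | h2 <;> split_ifs <;> omega

theorem monA_off {n : ℕ} {w : ℕ × ℤ} (hw : w ∈ XA n) {p : List (ℝ × ℝ)}
    (hp : p ∈ pathsA n w.1 w.2) (x : ℕ × ℤ) (hx : x ∉ XA n) : mon (.A n) p x = 0 := by
  obtain ⟨j, l⟩ := x
  obtain ⟨z, hz, hs, hm⟩ := pathsA_int hp
  obtain ⟨c1, c2⟩ := CpA_iff hp hz j l
  simp only [XA, Set.mem_ofPred_eq] at hx hw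
  simp only [mon, ind_congr c1, ind_congr c2]
  by_cases hj : j ≤ n
  · have := hm j (by omega)
    rw [ind_neg (by omega), ind_neg (by omega)]; rfl
  · rw [ind_neg (by omega), ind_neg (by omega)]; rfl

theorem zmaxA {n i : ℕ} {k : ℤ} {p q : List (ℝ × ℝ)} (hp : p ∈ pathsA n i k)
    (hq : q ∈ pathsA n i k) : zmax p q ∈ pathsA n i k := by
  obtain ⟨z, hz, hs, hm⟩ := pathsA_int hp
  obtain ⟨z', hz', hs', hm'⟩ := pathsA_int hq
  obtain ⟨hlen, hx, h0, h1, -⟩ := hp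
  obtain ⟨hlen', hx', h0', h1', -⟩ := hq
  have hl : p.length = q.length := by omega
  refine ⟨by rw [zmax_length hl, hlen], ?_, ?_, ?_, ?_⟩
  · intro r hr; rw [pt_zmax hl]; exact hx r hr
  · rw [pt_zmax hl]; simp [h0, h0']
  · rw [pt_zmax hl]; simp [h1, h1']
  · intro r hr
    rw [pt_zmax hl, pt_zmax hl]
    simp only
    rw [hz r (by omega), hz (r + 1) (by omega), hz' r (by omega), hz' (r + 1) (by omega)]
    have a1 := hs r hr
    have a2 := hs' r hr
    have a3 := hm r (by omega)
    have a4 := hm' r (by omega)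
    have : max (z (r + 1)) (z' (r + 1)) - max (z r) (z' r) = 1 ∨
      max (z (r + 1)) (z' (r + 1)) - max (z r) (z' r) = -1 := by omega
    rcases this with h | h
    · left; exact_mod_cast h
    · right; exact_mod_cast h

/-- The conditions on half paths. -/
def SpinD (n : ℕ) (ε : ℝ) (l : ℤ) (p : List (ℝ × ℝ)) : Prop :=
    (if l % 4 = 3 then ∀ r, r < n → (pt p r).1 = 2 * (r : ℝ)
     else ∀ r, r < n → (pt p r).1 = 4 * (n : ℝ) - 2 - 2 * (r : ℝ)) ∧
    (pt p n).1 = 2 * (n : ℝ) - 1 ∧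
    (pt p 0).2 = (l : ℝ) + 2 * (n : ℝ) - 1 ∧
    (∀ r, r + 2 ≤ n → (pt p (r + 1)).2 - (pt p r).2 = 2 ∨ (pt p (r + 1)).2 - (pt p r).2 = -2) ∧
    ((pt p n).2 - (pt p (n - 1)).2 = 1 + ε ∨ (pt p n).2 - (pt p (n - 1)).2 = -(1 + ε))

theorem SpinD_congr {n : ℕ} {ε : ℝ} {l : ℤ} {p q : List (ℝ × ℝ)} (h : ∀ r ≤ n, pt p r = pt q r)
    (hp : SpinD n ε l p) : SpinD n ε l q := by
  obtain ⟨h1, h2, h3, h4, h5⟩ := hp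
  refine ⟨?_, ?_, ?_, ?_, ?_⟩
  · split_ifs at h1 ⊢ <;> intro r hr <;> rw [← h r (by omega)] <;> exact h1 r hr
  · rw [← h n le_rfl]; exact h2
  · rw [← h 0 (by omega)]; exact h3
  · intro r hr
    rw [← h r (by omega), ← h (r + 1) (by omega)]; exact h4 r hr
  · rw [← h n le_rfl, ← h (n - 1) (by omega)]; exact h5

theorem spin_iff {n : ℕ} {ε : ℝ} {l : ℤ} {p : List (ℝ × ℝ)} :
    p ∈ pathsBspin n ε l ↔ p.length = n + 1 ∧ SpinD n ε l p := Iff.rfl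

theorem pathsB_iff {n i : ℕ} {k : ℤ} {ε : ℝ} (hi : i ≠ n) {p : List (ℝ × ℝ)} :
    p ∈ pathsB n ε i k ↔ p.length = 2 * n + 2 ∧
      SpinD n ε (k - (2 * (n : ℤ) - 2 * (i : ℤ) - 1)) p ∧
      SpinD n ε (k + (2 * (n : ℤ) - 2 * (i : ℤ) - 1)) p.reverse ∧
      0 < (pt p n).2 - (pt p.reverse n).2 := by
  simp only [pathsB, hi, if_false, Set.mem_ofPred_eq]
  constructor
  · rintro ⟨a, b, ha, hb, rfl, h1, h2⟩
    rw [spin_iff] at ha hb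
    have e1 : ∀ r ≤ n, pt a r = pt (a ++ b.reverse) r := by
      intro r hr
      simp only [pt, List.getD_eq_getElem?_getD]
      rw [List.getElem?_append_left (by omega)]
    have e2 : ∀ r ≤ n, pt b r = pt (a ++ b.reverse).reverse r := by
      intro r hr
      simp only [pt, List.getD_eq_getElem?_getD, List.reverse_append, List.reverse_reverse]
      rw [List.getElem?_append_left (by omega)]
    refine ⟨by simp; omega, SpinD_congr e1 ha.2, SpinD_congr e2 hb.2, ?_⟩
    rw [← e1 n le_rfl, ← e2 n le_rfl]; exact h2
  · rintro ⟨hl, ha, hb, h⟩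
    have e : ∀ q : List (ℝ × ℝ), ∀ r ≤ n, pt q r = pt (q.take (n + 1)) r := by
      intro q r hr
      simp only [pt, List.getD_eq_getElem?_getD]
      rw [List.getElem?_take_of_lt (by omega)]
    refine ⟨p.take (n + 1), p.reverse.take (n + 1), ?_, ?_, ?_, ?_, ?_⟩
    · exact ⟨by simp; omega, SpinD_congr (e p) ha⟩
    · exact ⟨by simp; omega, SpinD_congr (e p.reverse) hb⟩
    · rw [List.take_reverse, List.reverse_reverse, hl]
      rw [show 2 * n + 2 - (n + 1) = n + 1 by omega, List.take_append_drop]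
    · rw [← e _ n le_rfl, ← e _ n le_rfl, ha.2.1, hb.2.1]
    · rw [← e _ n le_rfl, ← e _ n le_rfl]; exact h

theorem SpinD_int {n : ℕ} (hn : 2 ≤ n) {ε : ℝ} {l : ℤ} {p : List (ℝ × ℝ)}
    (hp : SpinD n ε l p) :
    ∃ z : ℕ → ℤ, (∀ r < n, (pt p r).2 = z r) ∧
      (∀ r < n, (z r - (l + 2 * n - 1 + 2 * r)) % 4 = 0) ∧
      (∀ r, r + 2 ≤ n → z (r + 1) = z r + 2 ∨ z (r + 1) = z r - 2) ∧
      (((pt p n).2 = z (n - 1) + (1 + ε) ∧ z n = z (n - 1) + 2) ∨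
       ((pt p n).2 = z (n - 1) - (1 + ε) ∧ z n = z (n - 1) - 1)) := by
  obtain ⟨-, -, h0, hs, hc⟩ := hp
  have key : ∀ r < n, ∃ z : ℤ, (pt p r).2 = z ∧ (z - (l + 2 * n - 1 + 2 * r)) % 4 = 0 := by
    intro r
    induction r with
    | zero => intro _; exact ⟨l + 2 * n - 1, by rw [h0]; push_cast; ring, by push_cast; omega⟩
    | succ r ih =>
      intro hr
      obtain ⟨z, hz, hm⟩ := ih (by omega)
      rcases hs r (by omega) with h | h
      · exact ⟨z + 2, by push_cast; linarith, by push_cast; omega⟩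
      · exact ⟨z - 2, by push_cast; linarith, by push_cast; omega⟩
  choose! y hy hm using key
  have hs' : ∀ r, r + 2 ≤ n → y (r + 1) = y r + 2 ∨ y (r + 1) = y r - 2 := by
    intro r hr
    have := hs r hr
    rw [hy r (by omega), hy (r + 1) (by omega)] at this
    rcases this with h | h
    · left; have : (y (r + 1) : ℝ) = ((y r + 2 : ℤ) : ℝ) := by push_cast; linarith
      exact_mod_cast this
    · right; have : (y (r + 1) : ℝ) = ((y r - 2 : ℤ) : ℝ) := by push_cast; linarith
      exact_mod_cast this
  obtain ⟨u, hu⟩ : ∃ u : ℤ, (((pt p n).2 = y (n - 1) + (1 + ε) ∧ u = y (n - 1) + 2) ∨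
       ((pt p n).2 = y (n - 1) - (1 + ε) ∧ u = y (n - 1) - 1)) := by
    rw [hy (n - 1) (by omega)] at hc
    rcases hc with h | h
    · exact ⟨_, Or.inl ⟨by linarith, rfl⟩⟩
    · exact ⟨_, Or.inr ⟨by linarith, rfl⟩⟩
  refine ⟨fun r => if r < n then y r else u, ?_, ?_, ?_, ?_⟩
  · intro r hr; simp only [hr, if_true]; exact hy r hr
  · intro r hr; simp only [hr, if_true]; exact hm r hr
  · intro r hr
    simp only [show r < n by omega, show r + 1 < n by omega, if_true]; exact hs' r hr
  · simpa only [show n - 1 < n by omega, if_true, lt_irrefl, if_false] using hu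

theorem SpinD_zmax {n : ℕ} (hn : 2 ≤ n) {ε : ℝ} (he : 0 < ε ∧ ε < 1 / 2) {l : ℤ}
    {p q : List (ℝ × ℝ)} (hl : p.length = q.length)
    (hp : SpinD n ε l p) (hq : SpinD n ε l q) : SpinD n ε l (zmax p q) := by
  obtain ⟨z, hz, hm, hs, hc⟩ := SpinD_int hn hp
  obtain ⟨z', hz', hm', hs', hc'⟩ := SpinD_int hn hq
  obtain ⟨h1, h2, h3, h4, h5⟩ := hp
  obtain ⟨h1', h2', h3', h4', h5'⟩ := hq
  refine ⟨?_, ?_, ?_, ?_, ?_⟩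
  · simp only [pt_zmax hl]; exact h1
  · simp only [pt_zmax hl]; exact h2
  · simp only [pt_zmax hl]; simp [h3, h3']
  · intro r hr
    simp only [pt_zmax hl]
    rw [hz r (by omega), hz (r + 1) (by omega), hz' r (by omega), hz' (r + 1) (by omega)]
    have a1 := hs r hr
    have a2 := hs' r hr
    have a3 := hm r (by omega)
    have a4 := hm' r (by omega)
    have : max (z (r + 1)) (z' (r + 1)) - max (z r) (z' r) = 2 ∨
      max (z (r + 1)) (z' (r + 1)) - max (z r) (z' r) = -2 := by omega
    rcases this with h | h
    · left; exact_mod_cast h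
    · right; exact_mod_cast h
  · simp only [pt_zmax hl]
    have a3 := hm (n - 1) (by omega)
    have a4 := hm' (n - 1) (by omega)
    rw [hz (n - 1) (by omega)] at *
    rw [hz' (n - 1) (by omega)] at *
    have : z (n - 1) = z' (n - 1) ∨ z (n - 1) + 4 ≤ z' (n - 1) ∨ z' (n - 1) + 4 ≤ z (n - 1) := by
      omega
    rcases this with h | h | h
    · rw [← h] at h5' ⊢
      rw [max_self]
      rcases max_choice (pt p n).2 (pt q n).2 with e | e <;> rw [e] <;> assumption
    · have h' : (z (n - 1) : ℝ) + 4 ≤ z' (n - 1) := by exact_mod_cast h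
      have hlt : (pt p n).2 ≤ (pt q n).2 := by
        rcases h5 with a | a <;> rcases h5' with b | b <;> linarith
      rw [max_eq_right hlt, max_eq_right (by linarith)]; exact h5'
    · have h' : (z' (n - 1) : ℝ) + 4 ≤ z (n - 1) := by exact_mod_cast h
      have hlt : (pt q n).2 ≤ (pt p n).2 := by
        rcases h5 with a | a <;> rcases h5' with b | b <;> linarith
      rw [max_eq_left hlt, max_eq_left (by linarith)]; exact h5

theorem zmaxB {n : ℕ} (hn : 2 ≤ n) {ε : ℝ} (he : 0 < ε ∧ ε < 1 / 2) {i : ℕ} {k : ℤ}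
    {p q : List (ℝ × ℝ)} (hp : p ∈ pathsB n ε i k)
    (hq : q ∈ pathsB n ε i k) : zmax p q ∈ pathsB n ε i k := by
  by_cases hi : i = n
  · simp only [pathsB, hi, if_true] at *
    rw [spin_iff] at *
    have hl : p.length = q.length := by omega
    exact ⟨by rw [zmax_length hl, hp.1], SpinD_zmax hn he hl hp.2 hq.2⟩
  · rw [pathsB_iff hi] at *
    obtain ⟨a1, a2, a3, a4⟩ := hp
    obtain ⟨b1, b2, b3, b4⟩ := hq
    have hl : p.length = q.length := by omega
    have hl' : p.reverse.length = q.reverse.length := by simpa using hl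
    refine ⟨by rw [zmax_length hl, a1], SpinD_zmax hn he hl a2 b2, ?_, ?_⟩
    · rw [zmax_reverse hl]; exact SpinD_zmax hn he hl' a3 b3
    · rw [zmax_reverse hl, pt_zmax hl, pt_zmax hl']
      simp only
      have := max_lt_max (sub_pos.1 a4) (sub_pos.1 b4)
      linarith


/-- Corners of a half path away from the central column. -/
def HC (n : ℕ) (l0 : ℤ) (p : List (ℝ × ℝ)) (up : Bool) (x : ℕ × ℤ) : Prop :=
  (l0 + 2 * n - 1 + 2 * x.1 - x.2) % 4 = 0 ∧ (pt p x.1).2 = x.2 ∧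
  (if up then (x.2 : ℝ) < (pt p (x.1 - 1)).2 ∧ (x.2 : ℝ) < (pt p (x.1 + 1)).2
   else (pt p (x.1 - 1)).2 < x.2 ∧ (pt p (x.1 + 1)).2 < x.2)

theorem gate_int {n : ℕ} {ε : ℝ} (he : 0 < ε ∧ ε < 1 / 2) {p : List (ℝ × ℝ)} {z : ℕ → ℤ}
    (hz : ∀ r < n, (pt p r).2 = z r)
    (hc : ((pt p n).2 = z (n - 1) + (1 + ε) ∧ z n = z (n - 1) + 2) ∨
       ((pt p n).2 = z (n - 1) - (1 + ε) ∧ z n = z (n - 1) - 1)) (r : ℕ) (hr : r ≤ n) (l : ℤ) :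
    ((l : ℝ) < (pt p r).2 ↔ l < z r) ∧ ((pt p r).2 < l ↔ if r = n then z r ≤ l else z r < l) := by
  by_cases h : r = n
  · subst h
    simp only [if_true]
    rcases hc with ⟨h1, h2⟩ | ⟨h1, h2⟩
    · rw [h1, h2]
      refine ⟨⟨fun h => ?_, fun h => ?_⟩, ⟨fun h => ?_, fun h => ?_⟩⟩
      · by_contra hh
        have : z (r - 1) + 2 ≤ l := by omega
        have : (z (r - 1) : ℝ) + 2 ≤ l := by exact_mod_cast this
        linarith
      · have : l ≤ z (r - 1) + 1 := by omega
        have : (l : ℝ) ≤ z (r - 1) + 1 := by exact_mod_cast this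
        linarith
      · by_contra hh
        have : l ≤ z (r - 1) + 1 := by omega
        have : (l : ℝ) ≤ z (r - 1) + 1 := by exact_mod_cast this
        linarith
      · have : (z (r - 1) : ℝ) + 2 ≤ l := by exact_mod_cast h
        linarith
    · rw [h1, h2]
      refine ⟨⟨fun h => ?_, fun h => ?_⟩, ⟨fun h => ?_, fun h => ?_⟩⟩
      · by_contra hh
        have : z (r - 1) - 1 ≤ l := by omega
        have : (z (r - 1) : ℝ) - 1 ≤ l := by exact_mod_cast this
        linarith
      · have : l ≤ z (r - 1) - 2 := by omega
        have : (l : ℝ) ≤ z (r - 1) - 2 := by exact_mod_cast this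
        linarith
      · by_contra hh
        have : l ≤ z (r - 1) - 2 := by omega
        have : (l : ℝ) ≤ z (r - 1) - 2 := by exact_mod_cast this
        linarith
      · have : (z (r - 1) : ℝ) - 1 ≤ l := by exact_mod_cast h
        linarith
  · rw [hz r (by omega)]
    simp only [h, if_false]
    constructor <;> norm_cast

theorem int_core {a b l : ℤ} {U D : Prop} (h4 : (b - l) % 4 = 0) (ha : b = a + 2 ∨ b = a - 2)
    (hU : U → l ≤ b) (hU' : l + 4 ≤ b → U) (hD : b = l → (D ↔ ¬ U)) :
    ind (b = l ∧ l < a ∧ U) - ind (b = l ∧ a < l ∧ D) =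
      ind (l < a) + ind U - ind (l - 2 < b) - ind (l + 2 < b) := by
  rcases lt_trichotomy b l with h | h | h
  · have : ¬ U := fun u => by have := hU u; omega
    rw [ind_neg (by omega), ind_neg (by omega), ind_neg (s := l < a) (by omega), ind_neg this,
      ind_neg (s := l - 2 < b) (by omega), ind_neg (s := l + 2 < b) (by omega)]; rfl
  · rw [hD h, ind_pos (s := l - 2 < b) (by omega), ind_neg (s := l + 2 < b) (by omega)]
    rcases ha with ha | ha
    · by_cases u : U
      · rw [ind_neg (by omega), ind_neg (by tauto), ind_neg (s := l < a) (by omega), ind_pos u]; rfl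
      · rw [ind_neg (by omega), ind_pos ⟨h, by omega, u⟩, ind_neg (s := l < a) (by omega),
          ind_neg u]; rfl
    · by_cases u : U
      · rw [ind_pos ⟨h, by omega, u⟩, ind_neg (by tauto), ind_pos (s := l < a) (by omega),
          ind_pos u]; rfl
      · rw [ind_neg (by tauto), ind_neg (by omega), ind_pos (s := l < a) (by omega),
          ind_neg u]; rfl
  · rw [ind_neg (by omega), ind_neg (by omega), ind_pos (s := l < a) (by omega),
      ind_pos (hU' (by omega)),
      ind_pos (s := l - 2 < b) (by omega), ind_pos (s := l + 2 < b) (by omega)]; rfl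

set_option maxHeartbeats 1000000 in
theorem half_side {n : ℕ} (hn : 2 ≤ n) {ε : ℝ} (he : 0 < ε ∧ ε < 1 / 2) {l0 : ℤ}
    (hl0 : l0 % 2 = 1) {p : List (ℝ × ℝ)}
    (hp : SpinD n ε l0 p) {j : ℕ} {l : ℤ} (hj : 1 ≤ j) (hjn : j < n) (hl : l % 2 = 0) :
    ind (HC n l0 p true (j, l)) - ind (HC n l0 p false (j, l)) =
      ind (GS n l0 p (j - 1, l)) + ind (GS n l0 p (j + 1, l)) - ind (GS n l0 p (j, l - 2))
        - ind (GS n l0 p (j, l + 2)) := by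
  obtain ⟨z, hz, hm, hs, hc⟩ := SpinD_int hn hp
  have g := gate_int he hz hc
  have zz : ((z j : ℝ) = l ↔ z j = l) := by norm_cast
  simp only [HC, GS, (g (j - 1) (by omega) _).1, (g (j + 1) (by omega) _).1,
    (g (j - 1) (by omega) _).2, (g (j + 1) (by omega) _).2, hz j hjn, zz, Int.cast_lt,
    if_true, Bool.false_eq_true, if_false]
  clear g
  have m := hm j hjn
  have s1 := hs (j - 1) (by omega)
  rw [Nat.sub_add_cancel hj] at s1
  have hj1 : j - 1 ≠ n := by omega
  have hc' : (z n = z (n - 1) + 2) ∨ (z n = z (n - 1) - 1) := by tauto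
  simp only [hj1, if_false]
  push_cast [Nat.cast_sub hj]
  by_cases h0 : (l0 + 2 * n - 1 + 2 * j - l) % 4 = 0
  · have e1 : (l0 + 1 + 2 * n + 2 * (j - 1) - l) % 4 = 0 := by omega
    have e2 : (l0 + 1 + 2 * n + 2 * (j + 1) - l) % 4 = 0 := by omega
    have e3 : (l0 + 1 + 2 * n + 2 * j - (l - 2)) % 4 = 0 := by omega
    have e4 : (l0 + 1 + 2 * n + 2 * j - (l + 2)) % 4 = 0 := by omega
    simp only [h0, e1, e2, e3, e4, true_and]
    have h4 : (z j - l) % 4 = 0 := by clear e1 e2 e3 e4 s1 hc'; omega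
    clear e1 e2 e3 e4 m h0 hl0
    by_cases hn1 : j + 1 = n
    · simp only [hn1, if_true]
      obtain rfl : j = n - 1 := by omega
      exact int_core h4 s1 (by omega) (by omega) (by omega)
    · simp only [hn1, if_false]
      have s2 := hs j (by omega)
      exact int_core h4 s1 (by omega) (by omega) (by omega)
  · have e1 : ¬ (l0 + 1 + 2 * n + 2 * (j - 1) - l) % 4 = 0 := by omega
    have e2 : ¬ (l0 + 1 + 2 * n + 2 * (j + 1) - l) % 4 = 0 := by omega
    have e3 : ¬ (l0 + 1 + 2 * n + 2 * j - (l - 2)) % 4 = 0 := by omega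
    have e4 : ¬ (l0 + 1 + 2 * n + 2 * j - (l + 2)) % 4 = 0 := by omega
    simp only [h0, e1, e2, e3, e4, false_and, ind_neg not_false]; rfl

theorem half_center {n : ℕ} (hn : 2 ≤ n) {ε : ℝ} (he : 0 < ε ∧ ε < 1 / 2) {l0 : ℤ}
    (hl0 : l0 % 2 = 1) {p : List (ℝ × ℝ)}
    (hp : SpinD n ε l0 p) {c : ℤ} (hcc : c % 2 = 1) :
    ind ((pt p n).2 = c - ε) - ind ((pt p n).2 = c + ε) =
      ind (GS n l0 p (n - 1, c - 1)) + ind (GS n l0 p (n - 1, c + 1)) - ind (GS n l0 p (n, c + 1))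
        - ind (GS n l0 p (n, c - 1)) := by
  obtain ⟨z, hz, hm, hs, hc⟩ := SpinD_int hn hp
  have g := gate_int he hz hc
  have k1 : ((pt p n).2 = c - ε ↔ z n = z (n - 1) - 1 ∧ z (n - 1) = c + 1) := by
    rcases hc with ⟨h1, h2⟩ | ⟨h1, h2⟩
    · rw [h1]
      refine ⟨fun h => ?_, fun h => by omega⟩
      exfalso
      rcases lt_or_ge (z (n - 1)) c with h3 | h3
      · have : (z (n - 1) : ℝ) + 1 ≤ c := by exact_mod_cast h3
        have h4 : z (n - 1) + 1 = c ∨ z (n - 1) + 2 ≤ c := by omega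
        rcases h4 with h4 | h4
        · have : (z (n - 1) : ℝ) + 1 = c := by exact_mod_cast h4
          linarith
        · have : (z (n - 1) : ℝ) + 2 ≤ c := by exact_mod_cast h4
          linarith
      · have : (c : ℝ) ≤ z (n - 1) := by exact_mod_cast h3
        linarith
    · rw [h1]
      constructor
      · intro h
        have : (z (n - 1) : ℝ) = ((c + 1 : ℤ) : ℝ) := by push_cast; linarith
        exact ⟨h2, by exact_mod_cast this⟩
      · rintro ⟨-, h⟩
        rw [h]; push_cast; ring
  have k2 : ((pt p n).2 = c + ε ↔ z n = z (n - 1) + 2 ∧ z (n - 1) = c - 1) := by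
    rcases hc with ⟨h1, h2⟩ | ⟨h1, h2⟩
    · rw [h1]
      constructor
      · intro h
        have : (z (n - 1) : ℝ) = ((c - 1 : ℤ) : ℝ) := by push_cast; linarith
        exact ⟨h2, by exact_mod_cast this⟩
      · rintro ⟨-, h⟩
        rw [h]; push_cast; ring
    · rw [h1]
      refine ⟨fun h => ?_, fun h => by omega⟩
      exfalso
      have h4 : z (n - 1) ≤ c + 1 ∨ c + 2 ≤ z (n - 1) := by omega
      rcases h4 with h4 | h4
      · have : (z (n - 1) : ℝ) ≤ c + 1 := by exact_mod_cast h4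
        linarith
      · have : (c : ℝ) + 2 ≤ z (n - 1) := by exact_mod_cast h4
        linarith
  simp only [k1, k2, GS, (g (n - 1) (by omega) _).1, (g n (by omega) _).1]
  have m := hm (n - 1) (by omega)
  have hc' : (z n = z (n - 1) + 2) ∨ (z n = z (n - 1) - 1) := by tauto
  clear k1 k2 g hz hs hm hc hp
  have hn1 : ((n - 1 : ℕ) : ℤ) = n - 1 := by omega
  rw [hn1] at *
  by_cases h0 : (l0 - c) % 4 = 0
  · have e1 : (l0 + 1 + 2 * n + 2 * (n - 1) - (c - 1) : ℤ) % 4 = 0 := by omega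
    have e2 : ¬ (l0 + 1 + 2 * n + 2 * (n - 1) - (c + 1) : ℤ) % 4 = 0 := by omega
    have e3 : (l0 + 1 + 2 * n + 2 * n - (c + 1) : ℤ) % 4 = 0 := by omega
    have e4 : ¬ (l0 + 1 + 2 * n + 2 * n - (c - 1) : ℤ) % 4 = 0 := by omega
    simp only [e1, e2, e3, e4, true_and, false_and, ind_neg not_false]
    unfold ind
    rcases hc' with s2 | s2 <;> split_ifs <;> omega
  · have e1 : ¬ (l0 + 1 + 2 * n + 2 * (n - 1) - (c - 1) : ℤ) % 4 = 0 := by omega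
    have e2 : (l0 + 1 + 2 * n + 2 * (n - 1) - (c + 1) : ℤ) % 4 = 0 := by omega
    have e3 : ¬ (l0 + 1 + 2 * n + 2 * n - (c + 1) : ℤ) % 4 = 0 := by omega
    have e4 : (l0 + 1 + 2 * n + 2 * n - (c - 1) : ℤ) % 4 = 0 := by omega
    simp only [e1, e2, e3, e4, true_and, false_and, ind_neg not_false]
    unfold ind
    rcases hc' with s2 | s2 <;> split_ifs <;> omega


theorem half_x {n : ℕ} {ε : ℝ} {l0 : ℤ} {p : List (ℝ × ℝ)} (hp : SpinD n ε l0 p) {r : ℕ}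
    (hr : r < n) :
    (pt p r).1 = ((if l0 % 4 = 3 then 2 * (r : ℤ) else 4 * n - 2 - 2 * r : ℤ) : ℝ) := by
  have h := hp.1
  split_ifs at h ⊢ <;> rw [h r hr] <;> push_cast <;> ring

theorem half_x_ne {n : ℕ} {ε : ℝ} {l0 : ℤ} {p : List (ℝ × ℝ)} (hp : SpinD n ε l0 p) {r : ℕ}
    (hr : r < n) : (pt p r).1 ≠ 2 * (n : ℝ) - 1 := by
  rw [half_x hp hr]
  intro h
  have : (if l0 % 4 = 3 then 2 * (r : ℤ) else 4 * n - 2 - 2 * r : ℤ) = 2 * (n : ℤ) - 1 := by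
    exact_mod_cast h
  split_ifs at this <;> omega

theorem iota_side {n j : ℕ} {l : ℤ} (hjn : j < n) :
    iotaB n (j, l) =
      (if (2 * (n : ℤ) + l - 2 * (j : ℤ)) % 4 = 2 then 2 * (j : ℤ) else 4 * n - 2 - 2 * j, l) := by
  simp only [iotaB, show ¬ j = n by omega, if_false]
  split_ifs <;> rfl

theorem half_pt_iff {n : ℕ} {ε : ℝ} {l0 : ℤ} (hl0 : l0 % 2 = 1) {p : List (ℝ × ℝ)}
    (hp : SpinD n ε l0 p) {r j : ℕ} {l : ℤ} (hr : r < n) (hjn : j < n) (hl : l % 2 = 0) :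
    pt p r = (((iotaB n (j, l)).1 : ℝ), ((iotaB n (j, l)).2 : ℝ)) ↔
      r = j ∧ (l0 + 2 * n - 1 + 2 * j - l) % 4 = 0 ∧ (pt p j).2 = l := by
  rw [Prod.ext_iff, half_x hp hr, iota_side hjn]
  simp only [Int.cast_inj]
  constructor
  · rintro ⟨h1, h2⟩
    have : r = j ∧ (l0 + 2 * n - 1 + 2 * j - l) % 4 = 0 := by
      split_ifs at h1 <;> omega
    obtain ⟨rfl, h3⟩ := this
    exact ⟨rfl, h3, h2⟩
  · rintro ⟨rfl, h3, h4⟩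
    refine ⟨?_, h4⟩
    split_ifs <;> omega

theorem iota_ne {n j : ℕ} {l : ℤ} (hj : 1 ≤ j) (hjn : j < n) :
    (iotaB n (j, l)).1 ≠ 0 ∧ (iotaB n (j, l)).1 ≠ 2 * (n : ℤ) - 1 ∧
          (iotaB n (j, l)).1 ≠ 4 * (n : ℤ) - 2 := by
  rw [iota_side hjn]
  simp only
  split_ifs <;> omega

theorem Cp_side_iff {n j : ℕ} {ε : ℝ} {l : ℤ} (p : List (ℝ × ℝ)) (up : Bool) (hj : 1 ≤ j)
    (hjn : j < n) (hl : l % 2 = 0) :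
    (j, l) ∈ Cp (.B n ε) p up ↔ ∃ r : ℕ, 1 ≤ r ∧ r + 1 < p.length ∧
          pt p r = (((iotaB n (j, l)).1 : ℝ), ((iotaB n (j, l)).2 : ℝ)) ∧
          (if up then (pt p r).2 < (pt p (r - 1)).2 ∧ (pt p r).2 < (pt p (r + 1)).2
           else (pt p (r - 1)).2 < (pt p r).2 ∧ (pt p (r + 1)).2 < (pt p r).2) := by
  have h1 : (j, l) ∈ XB n := Or.inr ⟨hj, hjn, hl⟩
  have h2 : ¬ j = n := by omega
  have h3 := iota_ne (l := l) hj hjn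
  simp only [Cp, Set.mem_ofPred_eq, h1, true_and, h2, false_and, or_false, ne_eq, h3,
    not_false_eq_true, true_and]

theorem Cp_side_spin {n j : ℕ} {ε : ℝ} {l l0 : ℤ} (hl0 : l0 % 2 = 1) {p : List (ℝ × ℝ)}
    (hlen : p.length = n + 1) (hp : SpinD n ε l0 p) (up : Bool) (hj : 1 ≤ j)
    (hjn : j < n) (hl : l % 2 = 0) :
    (j, l) ∈ Cp (.B n ε) p up ↔ HC n l0 p up (j, l) := by
  rw [Cp_side_iff p up hj hjn hl]
  constructor
  · rintro ⟨r, h1, h2, h3, h4⟩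
    rw [half_pt_iff hl0 hp (by omega) hjn hl] at h3
    obtain ⟨rfl, h5, h6⟩ := h3
    rw [h6] at h4
    exact ⟨h5, h6, h4⟩
  · rintro ⟨h1, h2, h3⟩
    simp only at h1 h2 h3
    refine ⟨j, hj, by omega, ?_, ?_⟩
    · rw [half_pt_iff hl0 hp (by omega) hjn hl]; exact ⟨rfl, h1, h2⟩
    · rw [h2]; exact h3

theorem Cp_side_two {n j : ℕ} {ε : ℝ} {l l0 l1 : ℤ} (hl0 : l0 % 2 = 1) (hl1 : l1 % 2 = 1)
    {p : List (ℝ × ℝ)}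
    (hlen : p.length = 2 * n + 2) (hp : SpinD n ε l0 p) (hq : SpinD n ε l1 p.reverse)
    (up : Bool) (hj : 1 ≤ j) (hjn : j < n) (hl : l % 2 = 0) :
    (j, l) ∈ Cp (.B n ε) p up ↔ HC n l0 p up (j, l) ∨ HC n l1 p.reverse up (j, l) := by
  rw [Cp_side_iff p up hj hjn hl]
  have rev : ∀ s ≤ 2 * n + 1, pt p.reverse s = pt p (2 * n + 1 - s) := by
    intro s hs
    rw [pt_reverse (by omega), hlen]; congr 1
  have h3' := (iota_ne (l := l) hj hjn).2.1
  constructor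
  · rintro ⟨r, h1, h2, h3, h4⟩
    have hcase : r < n ∨ (r = n ∨ r = n + 1) ∨ n + 1 < r := by omega
    rcases hcase with hr | hr | hr
    · left
      rw [half_pt_iff hl0 hp (by omega) hjn hl] at h3
      obtain ⟨rfl, h5, h6⟩ := h3
      rw [h6] at h4
      exact ⟨h5, h6, h4⟩
    · exfalso
      have : (pt p r).1 = 2 * (n : ℝ) - 1 := by
        rcases hr with rfl | rfl
        · exact hp.2.1
        · have := rev n (by omega)
          rw [show 2 * n + 1 - n = n + 1 by omega] at this
          rw [← this]; exact hq.2.1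
      rw [h3] at this
      apply h3'
      simp only at this
      exact_mod_cast this
    · right
      obtain ⟨s, rfl⟩ : ∃ s, r = 2 * n + 1 - s := ⟨2 * n + 1 - r, by omega⟩
      have a1 := rev s (by omega)
      have a2 := rev (s + 1) (by omega)
      have a3 := rev (s - 1) (by omega)
      rw [show 2 * n + 1 - (s + 1) = 2 * n + 1 - s - 1 by omega] at a2
      rw [show 2 * n + 1 - (s - 1) = 2 * n + 1 - s + 1 by omega] at a3
      rw [← a1, ← a2, ← a3] at h4
      rw [← a1, half_pt_iff hl1 hq (by omega) hjn hl] at h3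
      obtain ⟨rfl, h5, h6⟩ := h3
      rw [h6] at h4
      refine ⟨h5, h6, ?_⟩
      split_ifs at h4 ⊢ <;> exact h4.symm
  · rintro (⟨h1, h2, h3⟩ | ⟨h1, h2, h3⟩)
    · simp only at h1 h2 h3
      refine ⟨j, hj, by omega, ?_, ?_⟩
      · rw [half_pt_iff hl0 hp (by omega) hjn hl]; exact ⟨rfl, h1, h2⟩
      · rw [h2]; exact h3
    · simp only at h1 h2 h3
      have a1 := rev j (by omega)
      have a2 := rev (j + 1) (by omega)
      have a3 := rev (j - 1) (by omega)
      rw [show 2 * n + 1 - (j + 1) = 2 * n + 1 - j - 1 by omega] at a2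
      rw [show 2 * n + 1 - (j - 1) = 2 * n + 1 - j + 1 by omega] at a3
      refine ⟨2 * n + 1 - j, by omega, by omega, ?_, ?_⟩
      · rw [← a1, half_pt_iff hl1 hq (by omega) hjn hl]; exact ⟨rfl, h1, h2⟩
      · rw [← a1, ← a2, ← a3, h2]
        split_ifs at h3 ⊢ <;> exact h3.symm

theorem mon_center {n : ℕ} {ε : ℝ} (p : List (ℝ × ℝ)) {c : ℤ} (hc : c % 2 = 1) :
    mon (.B n ε) p (n, c) = ind ((2 * (n : ℝ) - 1, (c : ℝ) - ε) ∈ p) -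
      ind ((2 * (n : ℝ) - 1, (c : ℝ) + ε) ∈ p) := by
  have h1 : (n, c) ∈ XB n := Or.inl ⟨rfl, hc⟩
  have h2 : (iotaB n (n, c)).1 = 2 * (n : ℤ) - 1 := by simp [iotaB]
  simp only [mon, Cp, Set.mem_ofPred_eq, h1, true_and, h2, ne_eq, not_true_eq_false, false_and,
    and_false, exists_false, false_or, if_true, Bool.false_eq_true, if_false]
  by_cases a : (2 * (n : ℝ) - 1, (c : ℝ) - ε) ∈ p <;>
    by_cases b : (2 * (n : ℝ) - 1, (c : ℝ) + ε) ∈ p <;> simp [a, b, ind]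

theorem mem_spin {n : ℕ} {ε : ℝ} {l0 : ℤ} {p : List (ℝ × ℝ)}
    (hlen : p.length = n + 1) (hp : SpinD n ε l0 p) (y : ℝ) :
    (2 * (n : ℝ) - 1, y) ∈ p ↔ (pt p n).2 = y := by
  rw [mem_iff_pt]
  constructor
  · rintro ⟨r, hr, h⟩
    have : r = n := by
      by_contra hh
      exact half_x_ne hp (show r < n by omega) (by rw [h])
    subst this; rw [h]
  · intro h
    exact ⟨n, by omega, Prod.ext hp.2.1 h⟩

theorem mem_two {n : ℕ} {ε : ℝ} {l0 l1 : ℤ} {p : List (ℝ × ℝ)}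
    (hlen : p.length = 2 * n + 2) (hp : SpinD n ε l0 p) (hq : SpinD n ε l1 p.reverse) (y : ℝ) :
    (2 * (n : ℝ) - 1, y) ∈ p ↔ (pt p n).2 = y ∨ (pt p.reverse n).2 = y := by
  have rev : ∀ s ≤ 2 * n + 1, pt p.reverse s = pt p (2 * n + 1 - s) := by
    intro s hs
    rw [pt_reverse (by omega), hlen]; congr 1
  rw [mem_iff_pt]
  constructor
  · rintro ⟨r, hr, h⟩
    have : r = n ∨ r = n + 1 := by
      by_contra hh
      have : r < n ∨ n + 1 < r := by omega
      rcases this with h' | h'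
      · exact half_x_ne hp h' (by rw [h])
      · have a := rev (2 * n + 1 - r) (by omega)
        rw [show 2 * n + 1 - (2 * n + 1 - r) = r by omega] at a
        exact half_x_ne hq (show 2 * n + 1 - r < n by omega) (by rw [a, h])
    rcases this with rfl | rfl
    · left; rw [h]
    · right
      rw [rev n (by omega), show 2 * n + 1 - n = n + 1 by omega, h]
  · rintro (h | h)
    · exact ⟨n, by omega, Prod.ext hp.2.1 h⟩
    · refine ⟨n + 1, by omega, ?_⟩
      have a := rev n (by omega)
      rw [show 2 * n + 1 - n = n + 1 by omega] at a
      rw [← a]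
      exact Prod.ext hq.2.1 h

theorem monB {n : ℕ} (hn : 2 ≤ n) {ε : ℝ} (he : 0 < ε ∧ ε < 1 / 2) {w : ℕ × ℤ} (hw : w ∈ XB n)
    {p : List (ℝ × ℝ)} (hp : p ∈ pathsB n ε w.1 w.2)
    (x : ℕ × ℤ) (hx : x ∈ XB n) :
    mon (.B n ε) p x = Lap (.B n ε) (fun y => ind (Gt (.B n ε) w p y)) x := by
  obtain ⟨j, l⟩ := x
  obtain ⟨i, k⟩ := w
  simp only [XB, Set.mem_ofPred_eq] at hx hw hp
  by_cases hi : i = n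
  · subst hi
    simp only [pathsB, if_true, spin_iff] at hp
    have hk : k % 2 = 1 := by omega
    simp only [Lap, Gt, if_true]
    by_cases hj : j = i
    · subst hj
      have hl : l % 2 = 1 := by omega
      simp only [if_true]
      rw [mon_center p hl, ← half_center hn he hk hp.2 hl, ind_congr (mem_spin hp.1 hp.2 _),
        ind_congr (mem_spin hp.1 hp.2 _)]
    · simp only [hj, if_false]
      have h1 : 1 ≤ j := by omega
      have h2 : j < i := by omega
      have h3 : l % 2 = 0 := by omega
      rw [← half_side hn he hk hp.2 h1 h2 h3]
      simp only [mon]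
      rw [ind_congr (Cp_side_spin hk hp.1 hp.2 true h1 h2 h3),
        ind_congr (Cp_side_spin hk hp.1 hp.2 false h1 h2 h3)]
  · rw [pathsB_iff hi] at hp
    obtain ⟨p1, p2, p3, p4⟩ := hp
    have hk : k % 2 = 0 := by omega
    simp only [Lap, Gt, hi, if_false]
    set c : ℤ := 2 * (n : ℤ) - 2 * (i : ℤ) - 1 with hc
    have hk0 : (k - c) % 2 = 1 := by omega
    have hk1 : (k + c) % 2 = 1 := by omega
    have ex : ∀ y, ind (GS n (k - c) p y ∨ GS n (k + c) p.reverse y) =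
        ind (GS n (k - c) p y) + ind (GS n (k + c) p.reverse y) := by
      intro y
      apply ind_or_excl
      rintro ⟨h1, h2⟩
      have h1 := h1.1
      have h2 := h2.1
      omega
    simp only [ex]
    by_cases hj : j = n
    · subst hj
      have hl : l % 2 = 1 := by omega
      simp only [if_true]
      have e1 := half_center hn he hk0 p2 hl
      have e2 := half_center hn he hk1 p3 hl
      rw [mon_center p hl, ind_congr (mem_two p1 p2 p3 _), ind_congr (mem_two p1 p2 p3 _),
        ind_or_excl, ind_or_excl]
      · linarith
      · rintro ⟨h1, h2⟩; linarith
      · rintro ⟨h1, h2⟩; linarith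
    · simp only [hj, if_false]
      have h1 : 1 ≤ j := by omega
      have h2 : j < n := by omega
      have h3 : l % 2 = 0 := by omega
      have e1 := half_side hn he hk0 p2 h1 h2 h3
      have e2 := half_side hn he hk1 p3 h1 h2 h3
      have ex2 : ∀ up, ¬ (HC n (k - c) p up (j, l) ∧ HC n (k + c) p.reverse up (j, l)) := by
        rintro up ⟨h1, h2⟩
        have h1 := h1.1
        have h2 := h2.1
        simp only at h1 h2
        omega
      simp only [mon]
      rw [ind_congr (Cp_side_two hk0 hk1 p1 p2 p3 true h1 h2 h3),
        ind_congr (Cp_side_two hk0 hk1 p1 p2 p3 false h1 h2 h3), ind_or_excl (ex2 _),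
        ind_or_excl (ex2 _)]
      linarith


def IsHalf (n : ℕ) (w : ℕ × ℤ) (p : List (ℝ × ℝ)) (l0 : ℤ) (a : List (ℝ × ℝ)) : Prop :=
  (w.1 = n ∧ l0 = w.2 ∧ a = p) ∨
  (w.1 ≠ n ∧ ((l0 = w.2 - (2 * (n : ℤ) - 2 * (w.1 : ℤ) - 1) ∧ a = p) ∨
    (l0 = w.2 + (2 * (n : ℤ) - 2 * (w.1 : ℤ) - 1) ∧ a = p.reverse)))

theorem Gt_half {n : ℕ} {ε : ℝ} {w : ℕ × ℤ} {p : List (ℝ × ℝ)} {x : ℕ × ℤ} :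
    Gt (.B n ε) w p x ↔ ∃ l0 a, IsHalf n w p l0 a ∧ GS n l0 a x := by
  simp only [Gt, IsHalf]
  by_cases h : w.1 = n
  · simp only [h, if_true]
    constructor
    · intro h; exact ⟨_, _, Or.inl ⟨trivial, rfl, rfl⟩, h⟩
    · rintro ⟨l0, a, ⟨-, rfl, rfl⟩ | ⟨h, -⟩, g⟩
      · exact g
      · exact absurd rfl h
  · simp only [h, if_false]
    constructor
    · rintro (h' | h')
      · exact ⟨_, _, Or.inr ⟨h, Or.inl ⟨rfl, rfl⟩⟩, h'⟩
      · exact ⟨_, _, Or.inr ⟨h, Or.inr ⟨rfl, rfl⟩⟩, h'⟩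
    · rintro ⟨l0, a, ⟨h, -⟩ | ⟨-, ⟨rfl, rfl⟩ | ⟨rfl, rfl⟩⟩, g⟩
      · exact h.elim
      · exact Or.inl g
      · exact Or.inr g

theorem Qt_half {n : ℕ} {ε : ℝ} {w : ℕ × ℤ} (p : List (ℝ × ℝ)) {x : ℕ × ℤ} :
    Qt (.B n ε) w x ↔ ∃ l0 a, IsHalf n w p l0 a ∧ (l0 + 1 + 2 * n + 2 * x.1 - x.2) % 4 = 0 := by
  simp only [Qt, IsHalf]
  by_cases h : w.1 = n
  · simp only [h, if_true]
    constructor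
    · intro h; exact ⟨_, _, Or.inl ⟨trivial, rfl, rfl⟩, h⟩
    · rintro ⟨l0, a, ⟨-, rfl, rfl⟩ | ⟨h, -⟩, g⟩
      · exact g
      · exact absurd rfl h
  · simp only [h, if_false]
    constructor
    · rintro (h' | h')
      · exact ⟨_, _, Or.inr ⟨h, Or.inl ⟨rfl, rfl⟩⟩, h'⟩
      · exact ⟨_, _, Or.inr ⟨h, Or.inr ⟨rfl, rfl⟩⟩, h'⟩
    · rintro ⟨l0, a, ⟨h, -⟩ | ⟨-, ⟨rfl, rfl⟩ | ⟨rfl, rfl⟩⟩, g⟩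
      · exact h.elim
      · exact Or.inl g
      · exact Or.inr g

theorem half_prop {n : ℕ} {ε : ℝ} {w : ℕ × ℤ} (hw : w ∈ XB n) {p : List (ℝ × ℝ)}
    (hp : p ∈ pathsB n ε w.1 w.2) {l0 : ℤ} {a : List (ℝ × ℝ)} (h : IsHalf n w p l0 a) :
    l0 % 2 = 1 ∧ SpinD n ε l0 a ∧ ∀ r ≤ n, pt a r ∈ p := by
  simp only [XB, Set.mem_ofPred_eq] at hw
  rcases h with ⟨h, rfl, rfl⟩ | ⟨h, h'⟩
  · simp only [pathsB, h, if_true, spin_iff] at hp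
    refine ⟨by omega, hp.2, fun r hr => pt_mem (by omega)⟩
  · rw [pathsB_iff h] at hp
    obtain ⟨hl, h1, h2, -⟩ := hp
    rcases h' with ⟨rfl, rfl⟩ | ⟨rfl, rfl⟩
    · exact ⟨by omega, h1, fun r hr => pt_mem (by omega)⟩
    · exact ⟨by omega, h2, fun r hr => List.mem_reverse.1 (pt_mem (by simp; omega))⟩

theorem half_same_x {n : ℕ} {ε : ℝ} {l0 l1 : ℤ} {a b : List (ℝ × ℝ)} (ha : SpinD n ε l0 a)
    (hb : SpinD n ε l1 b) (h : l0 % 4 = l1 % 4) {r : ℕ} (hr : r ≤ n) :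
    (pt a r).1 = (pt b r).1 := by
  by_cases h' : r < n
  · rw [half_x ha h', half_x hb h', h]
  · have : r = n := by omega
    rw [this, ha.2.1, hb.2.1]

theorem L6 (S : Setting) {w w' : ℕ × ℤ} (hw : w ∈ X S) (hw' : w' ∈ X S) {p p' : List (ℝ × ℝ)}
    (hp : p ∈ P S w.1 w.2) (hp' : p' ∈ P S w'.1 w'.2) (hs : StrictlyAbove p p') {x : ℕ × ℤ}
    (hx : x ∈ Wb S) (hG : Gt S w p x) (hQ : Qt S w' x) : Gt S w' p' x := by
  cases S with
  | A n =>
    simp only [Gt, Wb, P, pathsA, Set.mem_ofPred_eq] at *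
    have := hs _ (pt_mem (p := p) (r := x.1) (by omega)) _ (pt_mem (p := p') (r := x.1) (by omega))
      (by rw [hp.2.1 _ (by omega), hp'.2.1 _ (by omega)])
    linarith
  | B n ε =>
    rw [Gt_half] at *
    rw [Qt_half p'] at hQ
    obtain ⟨l0, a, h1, g⟩ := hG
    obtain ⟨l1, b, h2, g'⟩ := hQ
    simp only [Wb, Set.mem_ofPred_eq] at hx
    obtain ⟨o1, s1, m1⟩ := half_prop hw hp h1
    obtain ⟨o2, s2, m2⟩ := half_prop hw' hp' h2
    have g0 := g.1
    refine ⟨l1, b, h2, g', ?_⟩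
    have := hs _ (m1 x.1 hx.1) _ (m2 x.1 hx.1) (half_same_x s1 s2 (by omega) hx.1)
    linarith [g.2]

theorem L5 (S : Setting) {w : ℕ × ℤ} {p : List (ℝ × ℝ)} {x : ℕ × ℤ} (hG : Gt S w p x) :
    Qt S w x := by
  cases S with
  | A n => trivial
  | B n ε =>
    rw [Gt_half] at hG
    rw [Qt_half p]
    obtain ⟨l0, a, h1, g⟩ := hG
    exact ⟨l0, a, h1, g.1⟩

theorem P_len (S : Setting) {i : ℕ} {k : ℤ} {p q : List (ℝ × ℝ)} (hp : p ∈ P S i k)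
    (hq : q ∈ P S i k) : p.length = q.length := by
  cases S with
  | A n => exact hp.1.trans hq.1.symm
  | B n ε =>
    simp only [P] at hp hq
    by_cases h : i = n
    · simp only [pathsB, h, if_true] at hp hq
      exact hp.1.trans hq.1.symm
    · rw [pathsB_iff h] at hp hq
      exact hp.1.trans hq.1.symm

theorem P_x (S : Setting) {i : ℕ} {k : ℤ} {p q : List (ℝ × ℝ)} (hp : p ∈ P S i k)
    (hq : q ∈ P S i k) : ∀ r < p.length, (pt p r).1 = (pt q r).1 := by
  have hl := P_len S hp hq
  intro r hr
  cases S with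
  | A n =>
    simp only [P, pathsA, Set.mem_ofPred_eq] at hp hq
    rw [hp.2.1 _ (by omega), hq.2.1 _ (by omega)]
  | B n ε =>
    simp only [P] at hp hq
    by_cases h : i = n
    · simp only [pathsB, h, if_true, spin_iff] at hp hq
      exact half_same_x hp.2 hq.2 rfl (by omega)
    · rw [pathsB_iff h] at hp hq
      by_cases h' : r ≤ n
      · exact half_same_x hp.2.1 hq.2.1 rfl h'
      · have := half_same_x hp.2.2.1 hq.2.2.1 rfl (r := p.length - 1 - r) (by omega)
        rw [pt_reverse (by omega), pt_reverse (by omega), ← hl] at this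
        rwa [show p.length - 1 - (p.length - 1 - r) = r by omega] at this

theorem P_zmax (S : Setting) (hS : S.valid) {i : ℕ} {k : ℤ} {p q : List (ℝ × ℝ)} (hp : p ∈ P S i k)
    (hq : q ∈ P S i k) : zmax p q ∈ P S i k := by
  cases S with
  | A n => exact zmaxA hp hq
  | B n ε => exact zmaxB hS.1 hS.2 hp hq

theorem mon_Lap (S : Setting) (hS : S.valid) {w : ℕ × ℤ} (hw : w ∈ X S) {p : List (ℝ × ℝ)}
    (hp : p ∈ P S w.1 w.2) {x : ℕ × ℤ} (hx : x ∈ X S) :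
    mon S p x = Lap S (fun y => ind (Gt S w p y)) x := by
  cases S with
  | A n => exact monA hw hp x hx
  | B n ε => exact monB hS.1 hS.2 hw hp x hx

theorem mon_off (S : Setting) {w : ℕ × ℤ} (hw : w ∈ X S) {p : List (ℝ × ℝ)}
    (hp : p ∈ P S w.1 w.2) {x : ℕ × ℤ} (hx : x ∉ X S) : mon S p x = 0 := by
  cases S with
  | A n => exact monA_off hw hp x hx
  | B n ε =>
    have h1 : ∀ b, x ∉ Cp (.B n ε) p b := fun b h => hx h.1
    simp only [mon, ind_neg (h1 _), sub_self]

theorem GS_zmax {n : ℕ} {l0 : ℤ} {p q : List (ℝ × ℝ)} (h : p.length = q.length) {x : ℕ × ℤ} :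
    GS n l0 (zmax p q) x ↔ GS n l0 p x ∨ GS n l0 q x := by
  simp only [GS, pt_zmax h, lt_max_iff]
  tauto

theorem L4 (S : Setting) {w : ℕ × ℤ} {p q : List (ℝ × ℝ)} (h : p.length = q.length) {x : ℕ × ℤ} :
    Gt S w (zmax p q) x ↔ Gt S w p x ∨ Gt S w q x := by
  cases S with
  | A n => simp only [Gt, pt_zmax h, lt_max_iff]
  | B n ε =>
    have h' : p.reverse.length = q.reverse.length := by simpa using h
    simp only [Gt, zmax_reverse h, GS_zmax h, GS_zmax h']
    split_ifs <;> tauto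

theorem L7 (S : Setting) {w : ℕ × ℤ} {p q : List (ℝ × ℝ)}
    (hp : p ∈ P S w.1 w.2) (hq : q ∈ P S w.1 w.2) {x : ℕ × ℤ} (hx : Bdry S x.1) :
    Gt S w p x ↔ Gt S w q x := by
  cases S with
  | A n =>
    simp only [P, pathsA, Set.mem_ofPred_eq] at hp hq
    simp only [Gt]
    rcases hx with hx | hx
    · rw [hx, hp.2.2.1, hq.2.2.1]
    · rw [hx, hp.2.2.2.1, hq.2.2.2.1]
  | B n ε =>
    simp only [P] at hp hq
    simp only [Bdry] at hx
    by_cases h : w.1 = n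
    · simp only [pathsB, h, if_true, spin_iff] at hp hq
      simp only [Gt, h, if_true, GS, hx, hp.2.2.2.1, hq.2.2.2.1]
    · rw [pathsB_iff h] at hp hq
      simp only [Gt, h, if_false, GS, hx, hp.2.1.2.2.1, hq.2.1.2.2.1, hp.2.2.1.2.2.1,
        hq.2.2.1.2.2.1]

theorem ev_lt (c : ℝ) : ∀ᶠ l : ℤ in Filter.atBot, (l : ℝ) < c :=
  (tendsto_intCast_atBot_iff.2 Filter.tendsto_id).eventually_lt_atBot c

theorem L8 (S : Setting) (w : ℕ × ℤ) (p : List (ℝ × ℝ)) :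
    ∀ᶠ l : ℤ in Filter.atBot, ∀ x ∈ Wb S, x.2 = l → (Gt S w p x ↔ Qt S w x) := by
  have hA : ∀ (M : ℕ) (a : List (ℝ × ℝ)),
      ∀ᶠ l : ℤ in Filter.atBot, ∀ j ∈ Set.Iic M, (l : ℝ) < (pt a j).2 := by
    intro M a
    rw [Filter.eventually_all_finite (Set.finite_Iic M)]
    intro j _
    exact ev_lt _
  cases S with
  | A n =>
    filter_upwards [hA (n + 1) p] with l hl x hx e
    subst e
    simp only [Wb, Set.mem_ofPred_eq] at hx
    simp only [Gt, Qt, iff_true]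
    exact hl _ hx.1
  | B n ε =>
    filter_upwards [hA n p, hA n p.reverse] with l hl hl' x hx e
    subst e
    simp only [Wb, Set.mem_ofPred_eq] at hx
    simp only [Gt, Qt, GS, hl _ hx.1, hl' _ hx.1, and_true]

theorem tmon_Lap (S : Setting) (hS : S.valid) {T : ℕ} {w : Fin T → ℕ × ℤ} (hw : ∀ t, w t ∈ X S)
    {ps : Fin T → List (ℝ × ℝ)} (hps : ∀ t, ps t ∈ P S (w t).1 (w t).2) {x : ℕ × ℤ}
    (hx : x ∈ X S) :
    tmon S ps x = Lap S (fun y => ∑ t, ind (Gt S (w t) (ps t) y)) x := by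
  rw [Lap_sum S (fun t y => ind (Gt S (w t) (ps t) y))]
  simp only [tmon, Finset.sum_apply]
  exact Finset.sum_congr rfl fun t _ => mon_Lap S hS (hw t) (hps t) hx

theorem tmon_off (S : Setting) {T : ℕ} {w : Fin T → ℕ × ℤ} (hw : ∀ t, w t ∈ X S)
    {ps : Fin T → List (ℝ × ℝ)} (hps : ∀ t, ps t ∈ P S (w t).1 (w t).2) {x : ℕ × ℤ}
    (hx : x ∉ X S) : tmon S ps x = 0 := by
  simp only [tmon, Finset.sum_apply]
  exact Finset.sum_eq_zero fun t _ => mon_off S (hw t) (hps t) hx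


/-- with `m = ∏ m(p_t)` for `(p_t) ∈ 𝒫̄` and `(i,k) ∈ W`: if `m A_{i,k}⁻¹` is
not of the form `∏ m(p'_t)` for any `(p'_t) ∈ 𝒫̄`, then neither is `m A_{i,k}⁻¹ A_{j,ℓ}` for
any `(j,ℓ) ∈ W` with `(j,ℓ) ≠ (i,k)`. -/
theorem stmt12 (S : Setting) (hS : S.valid) {T : ℕ} (hT : 1 ≤ T)
    (w : Fin T → ℕ × ℤ) (hw : IsSnake S w)
    (ps : Fin T → List (ℝ × ℝ)) (hps : ps ∈ PBar S w)
    (i : ℕ) (k : ℤ) (hik : (i, k) ∈ W S)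
    (h : ∀ ps' ∈ PBar S w, tmon S ps' ≠ tmon S ps - Amon S i k) :
    ∀ j : ℕ, ∀ l : ℤ, (j, l) ∈ W S → (j, l) ≠ (i, k) →
      ∀ ps' ∈ PBar S w, tmon S ps' ≠ tmon S ps - Amon S i k + Amon S j l := by


  intro j l hjl hne ps' hps' heq
  have hX := hw.1
  obtain ⟨hP, hN⟩ := hps
  obtain ⟨hP', hN'⟩ := hps'
  set E : ℕ × ℤ → ℤ := fun y => ∑ t, ind (Gt S (w t) (ps t) y) with hE
  set E' : ℕ × ℤ → ℤ := fun y => ∑ t, ind (Gt S (w t) (ps' t) y) with hE'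
  have hYoff : ∀ {a b : _} {x : ℕ × ℤ}, (a, b) ∈ W S → Bdry S x.1 → Y (a, b) x = 0 := by
    intro a b x hab hx
    simp only [Y]
    rw [if_neg]
    rintro rfl
    exact W_not_bdry S hS hab hx
  obtain ⟨L0, hL0⟩ : ∃ L : ℤ, ∀ l ≤ L, ∀ t, (∀ x ∈ Wb S, x.2 = l →
      (Gt S (w t) (ps t) x ↔ Qt S (w t) x)) ∧ (∀ x ∈ Wb S, x.2 = l →
      (Gt S (w t) (ps' t) x ↔ Qt S (w t) x)) := by
    rw [← Filter.eventually_atBot, Filter.eventually_all]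
    intro t
    exact (L8 S (w t) (ps t)).and (L8 S (w t) (ps' t))
  have hD : ∀ x ∈ Wb S, (E' - E - Y (i, k) + Y (j, l)) x = 0 := by
    apply Lap_inj S hS _ _ _ (min L0 (min (k - 1) (l - 1)))
    · intro x hx hxL
      have h1 : E' x = E x := Finset.sum_congr rfl fun t _ => ind_congr
        (((hL0 x.2 (by omega) t).2 x hx rfl).trans ((hL0 x.2 (by omega) t).1 x hx rfl).symm)
      have h2 : Y (i, k) x = 0 := by
        simp only [Y]; rw [if_neg]; rintro rfl; simp at hxL
      have h3 : Y (j, l) x = 0 := by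
        simp only [Y]; rw [if_neg]; rintro rfl; simp at hxL
      simp only [Pi.add_apply, Pi.sub_apply, h1, h2, h3]; ring
    · intro x hx
      rw [Lap_add, Lap_sub, Lap_sub, Lap_Y S hS hik hx, Lap_Y S hS hjl hx,
        ← tmon_Lap S hS hX hP hx, ← tmon_Lap S hS hX hP' hx, heq]
      simp only [Pi.add_apply, Pi.sub_apply]; ring
    · intro x hx hb
      have h1 : E' x = E x := Finset.sum_congr rfl fun t _ => ind_congr (L7 S (hP' t) (hP t) hb)
      simp only [Pi.add_apply, Pi.sub_apply, h1, hYoff hik hb, hYoff hjl hb]; ring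
  have hP'' : ∀ t, zmax (ps t) (ps' t) ∈ P S (w t).1 (w t).2 :=
    fun t => P_zmax S hS (hP t) (hP' t)
  have hEE : ∀ x ∈ Wb S, (fun y => ∑ t, ind (Gt S (w t) (zmax (ps t) (ps' t)) y)) x
      = (E + Y (i, k)) x := by
    intro x hx
    have h1 : ∑ t, ind (Gt S (w t) (zmax (ps t) (ps' t)) x) = max (E x) (E' x) := by
      rw [hE, hE']
      simp only
      rw [← sum_ind_or (fun t => Qt S (w t) x) (fun t => Gt S (w t) (ps t) x)
        (fun t => Gt S (w t) (ps' t) x)]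
      · exact Finset.sum_congr rfl fun t _ => ind_congr (L4 S (P_len S (hP t) (hP' t)))
      · intro s t hst g q
        exact L6 S (hX s) (hX t) (hP s) (hP t) (hN s t hst) hx g q
      · intro s t hst g q
        exact L6 S (hX s) (hX t) (hP' s) (hP' t) (hN' s t hst) hx g q
      · intro t g; exact L5 S g
      · intro t g; exact L5 S g
    have h2 := hD x hx
    simp only [Pi.add_apply, Pi.sub_apply] at h2 ⊢
    rw [h1]
    have h3 : Y (i, k) x = 0 ∧ 0 ≤ Y (j, l) x ∨ Y (i, k) x = 1 ∧ Y (j, l) x = 0 := by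
      simp only [Y]
      by_cases c : x = (i, k)
      · right; subst c; simp [hne.symm]
      · left; simp only [c, if_false, true_and]; split_ifs <;> norm_num
    omega
  refine h (fun t => zmax (ps t) (ps' t)) ⟨hP'', ?_⟩ ?_
  · intro s t hst
    exact strictlyAbove_zmax (P_len S (hP s) (hP' s)) (P_len S (hP t) (hP' t))
      (P_x S (hP s) (hP' s)) (P_x S (hP t) (hP' t)) (hN s t hst) (hN' s t hst)
  · funext x
    by_cases hx : x ∈ X S
    · rw [tmon_Lap S hS hX hP'' hx, Lap_congr S hS _ _ hEE hx, Lap_add, Lap_Y S hS hik hx,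
        ← tmon_Lap S hS hX hP hx]
      simp only [Pi.sub_apply]; ring
    · rw [tmon_off S hX hP'' hx, Pi.sub_apply, tmon_off S hX hP hx, Amon_off S hS hik hx]; ring

end Paper
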